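/- arXiv:solv-int/9909002 — 5 statements merged into one kernel-verified Lean document; each statement's English description precedes it below -/
import Mathlib

section
/- Let 0 < γ < 2 and let f : ℤ≥0 × ℤ≥0 → ℂ satisfy the cross-ratio equation (q) at every (n,m) and the constraint (c) with parameter γ at every (n,m) (all denominators occurring being nonzero), with initial conditions f_{0,0} = 0, f_{1,0} = 1, f_{0,1} = e^{iγπ/2}. Then f is an immersion: for any two adjacent elementary quadrilaterals, the interiors of the convex hulls of their four vertices are disjoint. -/
open Complex

noncomputable section

/-- Vertex set of the elementary quadrilateral at `(n,m)`. -/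
def quadVerts (f : ℕ → ℕ → ℂ) (n m : ℕ) : Set ℂ :=
  {f n m, f (n+1) m, f (n+1) (m+1), f n (m+1)}

/-- Interior of the convex hull of the elementary quadrilateral at `(n,m)`. -/
def quadInt (f : ℕ → ℕ → ℂ) (n m : ℕ) : Set ℂ :=
  interior (convexHull ℝ (quadVerts f n m))

/-- `f` is an immersion: interiors of (convex hulls of) adjacent elementary
quadrilaterals are disjoint. -/
def IsImmersion (f : ℕ → ℕ → ℂ) : Prop :=
  ∀ n m : ℕ,
    Disjoint (quadInt f n m) (quadInt f (n+1) m) ∧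
    Disjoint (quadInt f n m) (quadInt f n (m+1))

/-- The cross-ratio equation (q): every elementary quadrilateral has cross-ratio -1. -/
def CrossRatioEq (f : ℕ → ℕ → ℂ) : Prop :=
  ∀ n m : ℕ,
    (f n m - f (n+1) m) * (f (n+1) (m+1) - f n (m+1)) =
      -((f (n+1) m - f (n+1) (m+1)) * (f n (m+1) - f n m))

/-- Nonvanishing of the denominators occurring in the cross-ratio (q). -/
def QDenomNonzero (f : ℕ → ℕ → ℂ) : Prop :=
  ∀ n m : ℕ, f (n+1) m - f (n+1) (m+1) ≠ 0 ∧ f n (m+1) - f n m ≠ 0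

/-- Nonvanishing of the denominators occurring in the constraint (c). -/
def CDenomNonzero (f : ℕ → ℕ → ℂ) : Prop :=
  ∀ n m : ℕ, (n ≠ 0 → f (n+1) m - f (n-1) m ≠ 0) ∧ (m ≠ 0 → f n (m+1) - f n (m-1) ≠ 0)

/-- The constraint (c) with parameter `γ`; for `n = 0` (resp. `m = 0`) the
corresponding term is absent. -/
def ConstraintC (γ : ℂ) (f : ℕ → ℕ → ℂ) : Prop :=
  ∀ n m : ℕ,
    γ * f n m =
      (if n = 0 then 0 else
        2 * (n : ℂ) * ((f (n+1) m - f n m) * (f n m - f (n-1) m)) / (f (n+1) m - f (n-1) m)) +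
      (if m = 0 then 0 else
        2 * (m : ℂ) * ((f n (m+1) - f n m) * (f n m - f n (m-1))) / (f n (m+1) - f n (m-1)))

open scoped ComplexConjugate

/-!
After a rotation of the image, `f` is symmetric under the exchange of the two lattice directions
combined with complex conjugation. The elementary quadrilaterals are then alternately kites and
quadrilaterals with two right angles, and adjacent ones have disjoint interiors as soon as all of
them are positively oriented, that is, as soon as the quotient of the two edges at each lattice
point has positive imaginary part.

Positivity on the diagonal comes from the isomonodromic description of the constraint. At `(n, n)`
the wave function of the linear system with spectral parameter `s` has a zero of order `n` at
`s = I`, and what remains after removing it is a pair of functions holomorphic in the upper half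
plane whose quotient takes at `s = I` the value `f (n + 1) n - f n n`. This quotient stays in the
sector `-arg s ≤ arg ≤ 0`: the Schwarz–Pick lemma, applied to the quotient and to `s` times the
quotient, is exactly what the passage from `(n, n)` to `(n + 1, n + 1)` requires. Hence the
horizontal edges at the diagonal lie in the open fourth quadrant. Away from the diagonal, positivity
is propagated one parallel of the diagonal at a time: the angles at an interior vertex decide one
parity of `n + m`, the difference of two neighbouring constraints the other.
-/

/-! ### Half planes and convex hulls -/

lemma disjoint_interior_convexHull_of_le {E : Type*} [AddCommGroup E] [Module ℝ E]
    [TopologicalSpace E] [ContinuousAdd E] [ContinuousSMul ℝ E] {S T : Set E} (φ : E →L[ℝ] ℝ)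
    (hφ : φ ≠ 0) {c : ℝ} (hS : ∀ z ∈ S, c ≤ φ z) (hT : ∀ z ∈ T, φ z ≤ c) :
    Disjoint (interior (convexHull ℝ S)) (interior (convexHull ℝ T)) := by
  have hopen : IsOpenMap φ := φ.isOpenMap_of_ne_zero hφ
  have hS' : interior (convexHull ℝ S) ⊆ φ ⁻¹' Set.Ioi c := by
    rw [← interior_Ici, hopen.preimage_interior_eq_interior_preimage φ.continuous]
    exact interior_mono (convexHull_min hS (convex_halfSpace_ge φ.toLinearMap.isLinear c))
  have hT' : interior (convexHull ℝ T) ⊆ φ ⁻¹' Set.Iio c := by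
    rw [← interior_Iic, hopen.preimage_interior_eq_interior_preimage φ.continuous]
    exact interior_mono (convexHull_min hT (convex_halfSpace_le φ.toLinearMap.isLinear c))
  exact (Set.Ioi_disjoint_Iio_same.preimage φ).mono hS' hT'

lemma disjoint_interior_convexHull_of_im_div {S T : Set ℂ} {a e : ℂ} (he : e ≠ 0)
    (hS : ∀ z ∈ S, 0 ≤ ((z - a) / e).im) (hT : ∀ z ∈ T, ((z - a) / e).im ≤ 0) :
    Disjoint (interior (convexHull ℝ S)) (interior (convexHull ℝ T)) := by
  let φ : ℂ →L[ℝ] ℝ := imCLM.comp (e⁻¹ • ContinuousLinearMap.id ℝ ℂ)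
  have hφ_apply (z : ℂ) : φ z = (z / e).im := by simp [φ, div_eq_inv_mul]
  have hφ : φ ≠ 0 := fun h => by
    have : φ (e * I) = 0 := by rw [h]; rfl
    simp [hφ_apply, mul_div_cancel_left₀ I he] at this
  refine disjoint_interior_convexHull_of_le φ hφ (c := (a / e).im) (fun z hz => ?_) fun z hz => ?_
  · simpa [hφ_apply, sub_div] using hS z hz
  · simpa [hφ_apply, sub_div] using hT z hz

/-! ### Elementary quadrilaterals -/

/-- The edge of the lattice map `f` from `(n, m)` to `(n + 1, m)`. -/
def hEdge (f : ℕ → ℕ → ℂ) (n m : ℕ) : ℂ := f (n + 1) m - f n m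

/-- The edge of the lattice map `f` from `(n, m)` to `(n, m + 1)`. -/
def vEdge (f : ℕ → ℕ → ℂ) (n m : ℕ) : ℂ := f n (m + 1) - f n m

/-- The quotient of the two edges of the elementary quadrilateral at `(n, m)` which meet in its
first vertex; its argument is the angle of the quadrilateral there. -/
def cornerRatio (f : ℕ → ℕ → ℂ) (n m : ℕ) : ℂ := vEdge f n m / hEdge f n m

/-- The Möbius rotation by a quarter turn about `I`. If a quadrilateral of cross-ratio `-1` has
corner ratio `w` at one vertex, then it has corner ratio `quarterTurn w` at the next one. -/
def quarterTurn (w : ℂ) : ℂ := (1 + w) / (1 - w)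

/-- The lattice obtained from `f` by exchanging the two lattice directions and conjugating. -/
def reflect (f : ℕ → ℕ → ℂ) (n m : ℕ) : ℂ := conj (f m n)

/-- A discrete conformal map: all elementary quadrilaterals have cross-ratio `-1`. -/
structure IsDiscreteConformal (f : ℕ → ℕ → ℂ) : Prop where
  crossRatioEq : CrossRatioEq f
  denom_ne_zero : QDenomNonzero f

lemma quarterTurn_im (w : ℂ) : (quarterTurn w).im = 2 * w.im / normSq (1 - w) := by
  simp only [quarterTurn, div_im, add_re, add_im, sub_re, sub_im, one_re, one_im]
  ring

lemma quarterTurn_im_pos {w : ℂ} : 0 < (quarterTurn w).im ↔ 0 < w.im := by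
  rcases eq_or_ne w 1 with rfl | hw
  · simp [quarterTurn]
  · have : 0 < normSq (1 - w) := normSq_pos.2 (sub_ne_zero.2 hw.symm)
    rw [quarterTurn_im, lt_div_iff₀ this, zero_mul, mul_pos_iff_of_pos_left two_pos]

lemma neg_inv_im_pos {w : ℂ} : 0 < (-w⁻¹).im ↔ 0 < w.im := by
  rcases eq_or_ne w 0 with rfl | hw
  · simp
  · rw [neg_im, inv_im, neg_div, neg_neg, lt_div_iff₀ (normSq_pos.2 hw), zero_mul]

lemma hEdge_reflect (f : ℕ → ℕ → ℂ) (n m : ℕ) :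
    hEdge (reflect f) n m = conj (vEdge f m n) := by
  simp [hEdge, vEdge, reflect]

lemma vEdge_reflect (f : ℕ → ℕ → ℂ) (n m : ℕ) :
    vEdge (reflect f) n m = conj (hEdge f m n) := by
  simp [hEdge, vEdge, reflect]

lemma cornerRatio_reflect (f : ℕ → ℕ → ℂ) (n m : ℕ) :
    cornerRatio (reflect f) n m = (conj (cornerRatio f m n))⁻¹ := by
  simp [cornerRatio, hEdge_reflect, vEdge_reflect]

lemma cornerRatio_reflect_im_pos {f : ℕ → ℕ → ℂ} {n m : ℕ} :
    0 < (cornerRatio (reflect f) n m).im ↔ 0 < (cornerRatio f m n).im := by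
  rw [← neg_inv_im_pos (w := cornerRatio f m n), cornerRatio_reflect, ← map_inv₀, conj_im, neg_im]

lemma quadInt_reflect (f : ℕ → ℕ → ℂ) (n m : ℕ) :
    quadInt (reflect f) n m = conjCLE '' quadInt f m n := by
  have hverts : quadVerts (reflect f) n m = conjCLE '' quadVerts f m n := by
    ext z
    simp only [quadVerts, reflect, Set.mem_insert_iff, Set.mem_singleton_iff, Set.image_insert_eq,
      Set.image_singleton, conjCLE_apply]
    tauto
  calc
    quadInt (reflect f) n m = interior (conjCLE '' convexHull ℝ (quadVerts f m n)) := by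
      rw [quadInt, hverts]
      exact congrArg interior (conjCLE.toLinearMap.image_convexHull _).symm
    _ = conjCLE '' quadInt f m n := (conjCLE.toHomeomorph.image_interior _).symm

namespace IsDiscreteConformal

variable {f : ℕ → ℕ → ℂ} (hf : IsDiscreteConformal f) (n m : ℕ)
include hf

lemma hEdge_mul_hEdge : hEdge f n m * hEdge f n (m + 1) = -(vEdge f n m * vEdge f (n + 1) m) := by
  simp only [hEdge, vEdge]
  linear_combination -hf.crossRatioEq n m

lemma vEdge_ne_zero : vEdge f n m ≠ 0 := (hf.denom_ne_zero n m).2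

lemma hEdge_ne_zero : hEdge f n m ≠ 0 := by
  intro h
  have := hf.hEdge_mul_hEdge n m
  rw [h, zero_mul, zero_eq_neg] at this
  exact mul_ne_zero (hf.vEdge_ne_zero n m) (hf.vEdge_ne_zero (n + 1) m) this

lemma hEdge_succ_mul :
    hEdge f n (m + 1) * (hEdge f n m + vEdge f n m) =
      vEdge f n m * (hEdge f n m - vEdge f n m) := by
  have := hf.hEdge_mul_hEdge n m
  simp only [hEdge, vEdge] at this ⊢
  linear_combination this

lemma vEdge_succ_mul :
    vEdge f (n + 1) m * (hEdge f n m + vEdge f n m) =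
      hEdge f n m * (vEdge f n m - hEdge f n m) := by
  have := hf.hEdge_mul_hEdge n m
  simp only [hEdge, vEdge] at this ⊢
  linear_combination this

lemma diagonal_mul :
    (f (n + 1) (m + 1) - f n m) * (hEdge f n m + vEdge f n m) = 2 * hEdge f n m * vEdge f n m := by
  have := hf.hEdge_succ_mul n m
  simp only [hEdge, vEdge] at this ⊢
  linear_combination this

lemma hEdge_add_vEdge_ne_zero : hEdge f n m + vEdge f n m ≠ 0 := by
  intro h
  have hd := hf.diagonal_mul n m
  rw [h, mul_zero] at hd
  exact mul_ne_zero (mul_ne_zero two_ne_zero (hf.hEdge_ne_zero n m)) (hf.vEdge_ne_zero n m) hd.symm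

lemma hEdge_sub_vEdge_ne_zero : hEdge f n m - vEdge f n m ≠ 0 := by
  intro h
  have := hf.hEdge_succ_mul n m
  rw [h, mul_zero] at this
  exact mul_ne_zero (hf.hEdge_ne_zero n (m + 1)) (hf.hEdge_add_vEdge_ne_zero n m) this

lemma cornerRatio_ne_zero : cornerRatio f n m ≠ 0 :=
  div_ne_zero (hf.vEdge_ne_zero n m) (hf.hEdge_ne_zero n m)

lemma quarterTurn_cornerRatio :
    quarterTurn (cornerRatio f n m) =
      (hEdge f n m + vEdge f n m) / (hEdge f n m - vEdge f n m) := by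
  rw [quarterTurn, cornerRatio, one_add_div (hf.hEdge_ne_zero n m),
    one_sub_div (hf.hEdge_ne_zero n m), div_div_div_cancel_right₀ (hf.hEdge_ne_zero n m)]

lemma neg_hEdge_div_vEdge_succ :
    -hEdge f n m / vEdge f (n + 1) m = quarterTurn (cornerRatio f n m) := by
  rw [hf.quarterTurn_cornerRatio,
    div_eq_div_iff (hf.vEdge_ne_zero (n + 1) m) (hf.hEdge_sub_vEdge_ne_zero n m)]
  linear_combination -hf.vEdge_succ_mul n m

lemma vEdge_succ_div_hEdge_succ :
    vEdge f (n + 1) m / hEdge f n (m + 1) = -(cornerRatio f n m)⁻¹ := by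
  rw [cornerRatio, inv_div, ← neg_div,
    div_eq_div_iff (hf.hEdge_ne_zero n (m + 1)) (hf.vEdge_ne_zero n m)]
  linear_combination hf.hEdge_mul_hEdge n m

lemma hEdge_succ_div_neg_vEdge :
    hEdge f n (m + 1) / -vEdge f n m = -(quarterTurn (cornerRatio f n m))⁻¹ := by
  rw [hf.quarterTurn_cornerRatio, inv_div, ← neg_div,
    div_eq_div_iff (neg_ne_zero.2 (hf.vEdge_ne_zero n m)) (hf.hEdge_add_vEdge_ne_zero n m)]
  linear_combination hf.hEdge_succ_mul n m

/-- The factors are the corner ratios at the vertex `(n + 1, m + 1)` of the four quadrilaterals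
surrounding it. -/
lemma vertex_mul_eq_one :
    cornerRatio f (n + 1) (m + 1) * quarterTurn (cornerRatio f n (m + 1)) *
      -(cornerRatio f n m)⁻¹ * -(quarterTurn (cornerRatio f (n + 1) m))⁻¹ = 1 := by
  rw [← hf.neg_hEdge_div_vEdge_succ, ← hf.vEdge_succ_div_hEdge_succ,
    ← hf.hEdge_succ_div_neg_vEdge, cornerRatio]
  have h₁ := hf.hEdge_ne_zero n (m + 1)
  have h₂ := hf.hEdge_ne_zero (n + 1) (m + 1)
  have h₃ := hf.vEdge_ne_zero (n + 1) m
  have h₄ := hf.vEdge_ne_zero (n + 1) (m + 1)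
  field_simp

protected lemma reflect : IsDiscreteConformal (reflect f) where
  crossRatioEq n m := by
    have h := congrArg conj (hf.crossRatioEq m n)
    simp only [map_mul, map_sub, map_neg] at h
    simp only [reflect]
    linear_combination h
  denom_ne_zero n m := by
    have h (a b : ℕ) (hab : vEdge (reflect f) a b = 0) : False :=
      hf.hEdge_ne_zero b a (by simpa [vEdge_reflect] using hab)
    exact ⟨fun h0 => h (n + 1) m (by rw [vEdge]; linear_combination -h0), h n m⟩

lemma disjoint_quadInt_succ (h₀ : 0 < (cornerRatio f n m).im)
    (h₁ : 0 < (cornerRatio f (n + 1) m).im) :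
    Disjoint (quadInt f n m) (quadInt f (n + 1) m) := by
  have he := hf.vEdge_ne_zero (n + 1) m
  refine disjoint_interior_convexHull_of_im_div (a := f (n + 1) m) he ?_ ?_
  · rintro z (rfl | rfl | rfl | rfl)
    · rw [← neg_sub (f (n + 1) m)]
      exact (hf.neg_hEdge_div_vEdge_succ n m ▸ quarterTurn_im_pos.2 h₀).le
    · simp
    · exact (div_self he ▸ one_im).ge
    · have : (f n (m + 1) - f (n + 1) m) / vEdge f (n + 1) m = 1 + cornerRatio f n m := by
        rw [← neg_neg (cornerRatio f n m), ← inv_inv (cornerRatio f n m), ← inv_neg,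
          ← hf.vEdge_succ_div_hEdge_succ, inv_div, ← sub_eq_add_neg, one_sub_div he]
        simp only [hEdge, vEdge]
        ring
      simpa [this] using h₀.le
  · rintro z (rfl | rfl | rfl | rfl)
    · simp
    · have : (hEdge f (n + 1) m / vEdge f (n + 1) m).im < 0 := by
        simpa [cornerRatio] using neg_inv_im_pos.2 h₁
      exact this.le
    · have : (f (n + 1 + 1) (m + 1) - f (n + 1) m) / vEdge f (n + 1) m =
          2 / (1 + cornerRatio f (n + 1) m) := by
        rw [cornerRatio, one_add_div (hf.hEdge_ne_zero _ _), div_div_eq_mul_div,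
          div_eq_div_iff he (hf.hEdge_add_vEdge_ne_zero _ _), hf.diagonal_mul]
      rw [this, div_im]
      simpa using div_nonneg (mul_nonneg zero_le_two h₁.le) (normSq_nonneg _)
    · exact (div_self he ▸ one_im).le

theorem isImmersion (hpos : ∀ n m, 0 < (cornerRatio f n m).im) : IsImmersion f := by
  refine fun n m => ⟨hf.disjoint_quadInt_succ n m (hpos n m) (hpos (n + 1) m), ?_⟩
  have := hf.reflect.disjoint_quadInt_succ m n (cornerRatio_reflect_im_pos.2 (hpos n m))
    (cornerRatio_reflect_im_pos.2 (hpos n (m + 1)))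
  rwa [quadInt_reflect, quadInt_reflect, Set.disjoint_image_iff conjCLE.injective] at this

end IsDiscreteConformal

/-! ### Discrete powers -/

/-- A discrete power map `Z^γ`, up to a choice of its values at `(1, 0)` and `(0, 1)`: a discrete
conformal map vanishing at the origin and satisfying the constraint with parameter `γ`. -/
structure IsDiscretePower (γ : ℝ) (f : ℕ → ℕ → ℂ) : Prop extends IsDiscreteConformal f where
  constraint : ConstraintC γ f
  constraint_denom_ne_zero : CDenomNonzero f
  map_zero_zero : f 0 0 = 0

lemma cornerRatio_const_mul {c : ℂ} (hc : c ≠ 0) (f : ℕ → ℕ → ℂ) (n m : ℕ) :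
    cornerRatio (fun n m => c * f n m) n m = cornerRatio f n m := by
  simp only [cornerRatio, hEdge, vEdge, ← mul_sub]
  exact mul_div_mul_left _ _ hc

namespace IsDiscretePower

variable {γ : ℝ} {f g : ℕ → ℕ → ℂ}

protected lemma reflect (hf : IsDiscretePower γ f) : IsDiscretePower γ (reflect f) where
  toIsDiscreteConformal := hf.toIsDiscreteConformal.reflect
  constraint n m := by
    have h := congrArg conj (hf.constraint m n)
    rw [add_comm]
    simpa [reflect, apply_ite conj, conj_ofNat] using h
  constraint_denom_ne_zero n m := by
    simp only [reflect, ← map_sub, (starRingEnd ℂ).injective.ne_iff' (map_zero conj)]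
    exact (hf.constraint_denom_ne_zero m n).symm
  map_zero_zero := by simp [reflect, hf.map_zero_zero]

lemma const_mul (hf : IsDiscretePower γ f) {c : ℂ} (hc : c ≠ 0) :
    IsDiscretePower γ (fun n m => c * f n m) where
  crossRatioEq n m := by linear_combination c ^ 2 * hf.crossRatioEq n m
  denom_ne_zero n m := by
    simpa only [← mul_sub, mul_ne_zero_iff_left hc] using hf.denom_ne_zero n m
  constraint n m := by
    have hterm (k a b d : ℂ) : k * (c * a * (c * b)) / (c * d) = c * (k * (a * b) / d) := by
      rw [← mul_div_assoc, ← mul_div_mul_left _ d hc]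
      ring
    have h := congrArg (c * ·) (hf.constraint n m)
    simp only [mul_add, mul_ite, mul_zero, mul_left_comm c] at h
    simp only [← mul_sub, hterm, h]
  constraint_denom_ne_zero n m := by
    simpa only [← mul_sub, mul_ne_zero_iff_left hc] using hf.constraint_denom_ne_zero n m
  map_zero_zero := by simp [hf.map_zero_zero]

lemma hEdge_add_hEdge_ne_zero (hf : IsDiscretePower γ f) (n m : ℕ) :
    hEdge f (n + 1) m + hEdge f n m ≠ 0 := by
  have := (hf.constraint_denom_ne_zero (n + 1) m).1 n.succ_ne_zero
  rwa [hEdge, hEdge, sub_add_sub_cancel]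

lemma axis_constraint (hf : IsDiscretePower γ f) (n : ℕ) :
    γ * f (n + 1) 0 * (hEdge f (n + 1) 0 + hEdge f n 0) =
      2 * (n + 1) * (hEdge f (n + 1) 0 * hEdge f n 0) := by
  have h := hf.constraint (n + 1) 0
  have hd := (hf.constraint_denom_ne_zero (n + 1) 0).1 n.succ_ne_zero
  simp only [n.succ_ne_zero, if_true, if_false, add_zero, Nat.add_sub_cancel] at h hd
  rw [h, hEdge, hEdge, sub_add_sub_cancel, div_mul_cancel₀ _ hd]
  push_cast
  ring

lemma axis_ext (hf : IsDiscretePower γ f) (hg : IsDiscretePower γ g) (h₁ : f 1 0 = g 1 0) (n : ℕ) :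
    f n 0 = g n 0 := by
  suffices h : f n 0 = g n 0 ∧ f (n + 1) 0 = g (n + 1) 0 from h.1
  induction n with
  | zero => exact ⟨by rw [hf.map_zero_zero, hg.map_zero_zero], h₁⟩
  | succ n ih =>
    refine ⟨ih.2, ?_⟩
    have hedge : hEdge f n 0 = hEdge g n 0 := by rw [hEdge, hEdge, ih.1, ih.2]
    have hF := hf.axis_constraint n
    have hG := hg.axis_constraint n
    rw [hedge, ih.2] at hF
    have hne : 2 * (n + 1) * hEdge g n 0 - γ * g (n + 1) 0 ≠ 0 := by
      intro h
      have : 2 * (n + 1) * hEdge g n 0 ^ 2 = 0 := by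
        linear_combination hEdge g n 0 * h + hG + hEdge g (n + 1) 0 * h
      exact mul_ne_zero (mul_ne_zero two_ne_zero n.cast_add_one_ne_zero)
        (pow_ne_zero 2 (hg.hEdge_ne_zero n 0)) this
    have hnext : hEdge f (n + 1) 0 = hEdge g (n + 1) 0 :=
      mul_left_cancel₀ hne (by linear_combination hG - hF)
    rw [hEdge, hEdge, ih.2] at hnext
    exact sub_left_injective hnext

theorem ext_of_initial (hf : IsDiscretePower γ f) (hg : IsDiscretePower γ g)
    (h₁₀ : f 1 0 = g 1 0) (h₀₁ : f 0 1 = g 0 1) : f = g := by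
  have haxis (m : ℕ) : f 0 m = g 0 m := by
    have := hf.reflect.axis_ext hg.reflect (by simp [reflect, h₀₁]) m
    exact (starRingEnd ℂ).injective this
  funext n
  induction n with
  | zero => exact funext haxis
  | succ n ihn =>
    funext m
    induction m with
    | zero => exact hf.axis_ext hg h₁₀ (n + 1)
    | succ m ihm =>
      have hF := hf.diagonal_mul n m
      have hG := hg.diagonal_mul n m
      have hu : hEdge f n m = hEdge g n m := by rw [hEdge, hEdge, ihm, ihn]
      have hv : vEdge f n m = vEdge g n m := by rw [vEdge, vEdge, ihn]
      rw [hu, hv, ihn, ← hG] at hF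
      exact sub_left_injective (mul_right_cancel₀ (hg.hEdge_add_vEdge_ne_zero n m) hF)

theorem reflect_eq_self (hf : IsDiscretePower γ f) (h : f 0 1 = conj (f 1 0)) : reflect f = f :=
  hf.reflect.ext_of_initial hf (by simp [reflect, h]) (by simp [reflect, h])

/-! ### Alternation of kites and right angles -/

lemma axis_odd_edge (hf : IsDiscretePower γ f) (k : ℕ)
    (h : γ * f (2 * k + 1) 0 = (2 * k + γ) * hEdge f (2 * k) 0) :
    (2 * k + 2 - γ) * hEdge f (2 * k + 1) 0 = (2 * k + γ) * hEdge f (2 * k) 0 := by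
  have hc := hf.axis_constraint (2 * k)
  push_cast at hc
  refine mul_left_cancel₀ (hf.hEdge_ne_zero (2 * k) 0) ?_
  linear_combination (hEdge f (2 * k + 1) 0 + hEdge f (2 * k) 0) * h - hc

lemma axis_even_edge (hf : IsDiscretePower γ f) (k : ℕ)
    (h : γ * f (2 * k + 1) 0 = (2 * k + γ) * hEdge f (2 * k) 0) :
    hEdge f (2 * k + 2) 0 = hEdge f (2 * k + 1) 0 := by
  have hodd := hf.axis_odd_edge k h
  have hc := hf.axis_constraint (2 * k + 1)
  push_cast at hc
  have hx : f (2 * k + 1 + 1) 0 = f (2 * k + 1) 0 + hEdge f (2 * k + 1) 0 := by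
    rw [hEdge, add_sub_cancel]
  have hne : (2 * (k + 1) : ℂ) ≠ 0 := mul_ne_zero two_ne_zero k.cast_add_one_ne_zero
  refine mul_left_cancel₀ (mul_ne_zero hne (hf.hEdge_ne_zero (2 * k + 1) 0)) ?_
  rw [hx] at hc
  linear_combination (hEdge f (2 * k + 2) 0 + hEdge f (2 * k + 1) 0) * (h - hodd) - hc

lemma axis_odd_apply (hf : IsDiscretePower γ f) (k : ℕ) :
    γ * f (2 * k + 1) 0 = (2 * k + γ) * hEdge f (2 * k) 0 := by
  induction k with
  | zero => simp [hEdge, hf.map_zero_zero]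
  | succ k ih =>
    have hodd := hf.axis_odd_edge k ih
    have heven := hf.axis_even_edge k ih
    have hx : f (2 * (k + 1) + 1) 0 =
        f (2 * k + 1) 0 + hEdge f (2 * k + 1) 0 + hEdge f (2 * k + 2) 0 := by
      rw [hEdge, hEdge]; ring_nf
    rw [hx, show 2 * (k + 1) = 2 * k + 2 by ring, heven]
    push_cast
    linear_combination ih - hodd

lemma axis_edges_collinear (hf : IsDiscretePower γ f) (n : ℕ) :
    ∃ r : ℝ, r ≠ 0 ∧ hEdge f n 0 = r * hEdge f (n + 1) 0 ∧ (Odd n → r = 1) := by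
  rcases n.even_or_odd' with ⟨k, rfl | rfl⟩
  · have h := hf.axis_odd_edge k (hf.axis_odd_apply k)
    have hn : (2 * k + γ : ℝ) ≠ 0 := fun h0 => by
      have h0' : (2 * k + γ : ℂ) = 0 := by exact_mod_cast h0
      rw [h0', zero_mul] at h
      have : (2 * k + 2 - γ : ℝ) = 0 := by
        exact_mod_cast (mul_eq_zero.1 h).resolve_right (hf.hEdge_ne_zero _ 0)
      have : (0 : ℝ) ≤ k := k.cast_nonneg
      linarith
    have hd : (2 * k + 2 - γ : ℝ) ≠ 0 := fun h0 => by
      have h0' : (2 * k + 2 - γ : ℂ) = 0 := by exact_mod_cast h0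
      rw [h0', zero_mul, zero_eq_mul] at h
      exact hn (by exact_mod_cast h.resolve_right (hf.hEdge_ne_zero _ 0))
    refine ⟨(2 * k + 2 - γ) / (2 * k + γ), div_ne_zero hd hn, ?_, by simp⟩
    push_cast
    rw [div_mul_eq_mul_div, eq_div_iff (by exact_mod_cast hn), h, mul_comm]
  · exact ⟨1, one_ne_zero, by simp [← hf.axis_even_edge k (hf.axis_odd_apply k)], fun _ => rfl⟩

end IsDiscretePower

/-- The shape of the corner ratio at `(n, m)` as a function of the parity of `N = n + m`: two edges
of equal length (so that the quadrilateral is a kite) if `N` is even, orthogonal edges if `N` is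
odd. -/
def IsKiteRatio (N : ℕ) (w : ℂ) : Prop := (Even N → ‖w‖ = 1) ∧ (Odd N → w.re = 0)

namespace IsKiteRatio

variable {N : ℕ} {w x y z : ℂ}

lemma add_two (h : IsKiteRatio N w) : IsKiteRatio (N + 2) w :=
  ⟨fun hN => h.1 (by simpa [parity_simps] using hN),
    fun hN => h.2 (by simpa [parity_simps] using hN)⟩

lemma conj_inv (h : IsKiteRatio N w) : IsKiteRatio N (conj w)⁻¹ :=
  ⟨fun hN => by rw [norm_inv, norm_conj, h.1 hN, inv_one],
    fun hN => by rw [inv_re, conj_re, h.2 hN, zero_div]⟩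

lemma neg_inv (h : IsKiteRatio N w) : IsKiteRatio N (-w⁻¹) :=
  ⟨fun hN => by rw [norm_neg, norm_inv, h.1 hN, inv_one],
    fun hN => by rw [neg_re, inv_re, h.2 hN, zero_div, neg_zero]⟩

protected lemma quarterTurn (h : IsKiteRatio N w) : IsKiteRatio (N + 1) (quarterTurn w) := by
  constructor <;> intro hN
  · have hre : w.re = 0 := h.2 (by simpa [parity_simps] using hN)
    have hne : 1 - w ≠ 0 := fun h0 => by simpa [hre] using congrArg re h0
    have : ‖1 + w‖ = ‖1 - w‖ := by
      rw [norm_def, norm_def, normSq_apply, normSq_apply]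
      simp [hre]
    rw [quarterTurn, norm_div, this, div_self (norm_ne_zero_iff.2 hne)]
  · have hnorm : normSq w = 1 := by
      rw [normSq_eq_norm_sq, h.1 (by simpa [parity_simps] using hN), one_pow]
    rw [normSq_apply] at hnorm
    rw [quarterTurn, div_re, ← add_div]
    simp only [add_re, one_re, sub_re, add_im, one_im, sub_im]
    rw [div_eq_zero_iff]
    left
    linear_combination -hnorm

lemma mul_mul (hx : IsKiteRatio N x) (hy : IsKiteRatio N y) (hz : IsKiteRatio N z) :
    IsKiteRatio N (x * y * z) := by
  constructor <;> intro hN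
  · rw [norm_mul, norm_mul, hx.1 hN, hy.1 hN, hz.1 hN, one_mul, one_mul]
  · simp [hx.2 hN, hy.2 hN, hz.2 hN]

lemma of_mul_eq_ofReal (hx : IsKiteRatio N x) {r : ℝ} (hr : r ≠ 0) (h : w * x = r)
    (hN : Even N → |r| = 1) : IsKiteRatio N w := by
  constructor <;> intro hN'
  · simpa [hx.1 hN', hN hN'] using congrArg norm h
  · have hxim : x.im ≠ 0 := fun h0 => by
      have hx0 : x = 0 := ext (hx.2 hN') h0
      rw [hx0, mul_zero] at h
      exact hr (by exact_mod_cast h.symm)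
    have him := congrArg im h
    simp only [mul_im, hx.2 hN', mul_zero, add_zero, ofReal_im] at him
    exact (mul_eq_zero.1 him).resolve_right hxim

end IsKiteRatio

namespace IsDiscretePower

variable {γ : ℝ} {f : ℕ → ℕ → ℂ}

lemma isKiteRatio_cornerRatio_axis (hf : IsDiscretePower γ f) (hsymm : reflect f = f) (n : ℕ) :
    IsKiteRatio n (cornerRatio f n 0) := by
  induction n with
  | zero =>
    refine ⟨fun _ => ?_, fun h => absurd h (by decide)⟩
    have h := congrArg norm (cornerRatio_reflect f 0 0)
    rw [hsymm, norm_inv, norm_conj] at h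
    have hpos := norm_pos_iff.2 (hf.cornerRatio_ne_zero 0 0)
    nlinarith [mul_inv_cancel₀ hpos.ne']
  | succ n ih =>
    obtain ⟨r, hr, hedge, hodd⟩ := hf.axis_edges_collinear n
    refine ih.quarterTurn.of_mul_eq_ofReal (neg_ne_zero.2 hr) ?_ ?_
    · rw [← hf.neg_hEdge_div_vEdge_succ, cornerRatio, hedge]
      have h₁ := hf.hEdge_ne_zero (n + 1) 0
      have h₂ := hf.vEdge_ne_zero (n + 1) 0
      push_cast
      field_simp
    · intro hn
      rw [hodd (by simpa [parity_simps] using hn), abs_neg, abs_one]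

theorem isKiteRatio_cornerRatio (hf : IsDiscretePower γ f) (hsymm : reflect f = f) (n m : ℕ) :
    IsKiteRatio (n + m) (cornerRatio f n m) := by
  induction n generalizing m with
  | zero =>
    rw [← hsymm, cornerRatio_reflect, zero_add]
    exact (hf.isKiteRatio_cornerRatio_axis hsymm m).conj_inv
  | succ n ihn =>
    induction m with
    | zero => exact hf.isKiteRatio_cornerRatio_axis hsymm (n + 1)
    | succ m ihm =>
      have hvertex : cornerRatio f (n + 1) (m + 1) * (quarterTurn (cornerRatio f n (m + 1)) *
          -(cornerRatio f n m)⁻¹ * -(quarterTurn (cornerRatio f (n + 1) m))⁻¹) = (1 : ℝ) := by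
        rw [ofReal_one, ← hf.vertex_mul_eq_one n m]
        ring
      refine IsKiteRatio.of_mul_eq_ofReal (IsKiteRatio.mul_mul ?_ ?_ ?_) one_ne_zero hvertex
        (by simp)
      · exact add_right_comm n 1 (m + 1) ▸ (ihn (m + 1)).quarterTurn
      · exact add_add_add_comm n m 1 1 ▸ (ihn m).add_two.neg_inv
      · exact ihm.quarterTurn.neg_inv

end IsDiscretePower

/-! ### The Schwarz–Pick lemma on the upper half plane -/

local notation "ℍₒ" => UpperHalfPlane.upperHalfPlaneSet

lemma sub_conj_ne_zero {s p : ℂ} (hs : s ∈ ℍₒ) (hp : p ∈ ℍₒ) : s - conj p ≠ 0 := by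
  intro h
  have him := congrArg im h
  rw [sub_im, conj_im, zero_im] at him
  have hs' : 0 < s.im := hs
  have hp' : 0 < p.im := hp
  linarith

lemma norm_sub_lt_norm_sub_conj {s p : ℂ} (hs : s ∈ ℍₒ) (hp : p ∈ ℍₒ) :
    ‖s - p‖ < ‖s - conj p‖ := by
  have hs' : 0 < s.im := hs
  have hp' : 0 < p.im := hp
  refine lt_of_pow_lt_pow_left₀ 2 (norm_nonneg _) ?_
  simp only [Complex.sq_norm, normSq_apply, sub_re, sub_im, conj_re, conj_im]
  nlinarith [mul_pos hs' hp']

lemma cayley_mem_upperHalfPlaneSet {p z : ℂ} (hp : p ∈ ℍₒ) (hz : z ∈ Metric.ball (0 : ℂ) 1) :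
    (p - conj p * z) / (1 - z) ∈ ℍₒ := by
  have hp' : 0 < p.im := hp
  rw [mem_ball_zero_iff] at hz
  have hnorm : normSq z < 1 := by
    rw [normSq_eq_norm_sq]
    exact pow_lt_one₀ (norm_nonneg z) hz two_ne_zero
  have hne : 1 - z ≠ 0 := fun h => by simp [← sub_eq_zero.1 h] at hz
  have him : ((p - conj p * z) / (1 - z)).im = p.im * (1 - normSq z) / normSq (1 - z) := by
    simp only [div_im, sub_im, sub_re, mul_re, mul_im, conj_re, conj_im, one_re, one_im,
      normSq_apply z]
    ring
  change 0 < ((p - conj p * z) / (1 - z)).im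
  rw [him]
  exact div_pos (mul_pos hp' (sub_pos.2 hnorm)) (normSq_pos.2 hne)

theorem schwarzPick_norm_le {ω : ℂ → ℂ} {p s : ℂ} (hp : p ∈ ℍₒ) (hs : s ∈ ℍₒ)
    (hω : DifferentiableOn ℂ ω ℍₒ) (hω_le : ∀ z ∈ ℍₒ, ‖ω z‖ ≤ 1) (hωp : ω p = 0) :
    ‖ω s‖ * ‖s - conj p‖ ≤ ‖s - p‖ := by
  have hne := sub_conj_ne_zero hs hp
  let cayley (z : ℂ) : ℂ := (p - conj p * z) / (1 - z)
  have hmaps : ∀ z ∈ Metric.ball (0 : ℂ) 1, cayley z ∈ ℍₒ := fun z hz =>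
    cayley_mem_upperHalfPlaneSet hp hz
  have hcayley : DifferentiableOn ℂ cayley (Metric.ball 0 1) := by
    refine DifferentiableOn.div (by fun_prop) (by fun_prop) fun z hz h => ?_
    simp [← sub_eq_zero.1 h] at hz
  have hball : ‖(s - p) / (s - conj p)‖ < 1 := by
    rw [norm_div, div_lt_one (norm_pos_iff.2 hne)]
    exact norm_sub_lt_norm_sub_conj hs hp
  have hpre : cayley ((s - p) / (s - conj p)) = s := by
    have hpp : p - conj p ≠ 0 := sub_conj_ne_zero hp hp
    have : 1 - (s - p) / (s - conj p) = (p - conj p) / (s - conj p) := by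
      rw [one_sub_div hne]; ring
    simp only [cayley, this]
    field_simp
    ring
  have hschwarz := norm_le_norm_of_mapsTo_ball (f := ω ∘ cayley) (hω.comp hcayley hmaps)
    (fun z hz => mem_closedBall_zero_iff.2 (hω_le _ (hmaps z hz))) (by simp [cayley, hωp]) hball
  rwa [Function.comp_apply, hpre, norm_div, le_div_iff₀ (norm_pos_iff.2 hne)] at hschwarz

lemma sq_norm_sub_mul (a b c : ℂ) :
    ‖a - c * b‖ ^ 2 = ‖a‖ ^ 2 + ‖c‖ ^ 2 * ‖b‖ ^ 2 - 2 * c.re * (a * conj b).re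
      - 2 * c.im * (a * conj b).im := by
  simp only [Complex.sq_norm, normSq_apply, sub_re, sub_im, mul_re, mul_im, conj_re, conj_im]
  ring

/-- Schwarz–Pick for the map `a / b` from the upper half plane to its closure, written so that it
makes sense at the poles. -/
theorem schwarzPick_of_ratio {a b : ℂ → ℂ} {p s w : ℂ} (hp : p ∈ ℍₒ) (hs : s ∈ ℍₒ)
    (ha : DifferentiableOn ℂ a ℍₒ) (hb : DifferentiableOn ℂ b ℍₒ)
    (hab : ∀ z ∈ ℍₒ, ¬(a z = 0 ∧ b z = 0)) (him : ∀ z ∈ ℍₒ, 0 ≤ (a z * conj (b z)).im)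
    (hw : 0 < w.im) (hval : a p = w * b p) :
    s.im * p.im * (‖a s‖ ^ 2 + ‖w‖ ^ 2 * ‖b s‖ ^ 2 - 2 * w.re * (a s * conj (b s)).re) ≤
      w.im * (‖s‖ ^ 2 + ‖p‖ ^ 2 - 2 * p.re * s.re) * (a s * conj (b s)).im := by
  have hden : ∀ z ∈ ℍₒ, a z - conj w * b z ≠ 0 := by
    intro z hz h
    have hz' := him z hz
    have hbz : b z = 0 := by
      rw [sub_eq_zero.1 h, mul_assoc, mul_conj, im_mul_ofReal, conj_im] at hz'
      have := normSq_nonneg (b z)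
      exact normSq_eq_zero.1 (by nlinarith)
    exact hab z hz ⟨by rw [sub_eq_zero.1 h, hbz, mul_zero], hbz⟩
  have hle : ∀ z ∈ ℍₒ, ‖(a z - w * b z) / (a z - conj w * b z)‖ ≤ 1 := by
    intro z hz
    rw [norm_div, div_le_one (norm_pos_iff.2 (hden z hz))]
    refine le_of_sq_le_sq ?_ (norm_nonneg _)
    rw [sq_norm_sub_mul, sq_norm_sub_mul, norm_conj, conj_re, conj_im]
    nlinarith [mul_nonneg hw.le (him z hz)]
  have h := schwarzPick_norm_le (ω := fun z => (a z - w * b z) / (a z - conj w * b z)) hp hs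
    ((ha.sub (hb.const_mul w)).div (ha.sub (hb.const_mul (conj w))) hden) hle (by simp [hval])
  rw [norm_div, div_mul_eq_mul_div, div_le_iff₀ (norm_pos_iff.2 (hden s hs))] at h
  have hsq := pow_le_pow_left₀ (by positivity) h 2
  have hs_sub : ‖s - p‖ ^ 2 = ‖s‖ ^ 2 + ‖p‖ ^ 2 - 2 * p.re * s.re - 2 * p.im * s.im := by
    simpa using sq_norm_sub_mul s 1 p
  have hs_conj : ‖s - conj p‖ ^ 2 = ‖s‖ ^ 2 + ‖p‖ ^ 2 - 2 * p.re * s.re + 2 * p.im * s.im := by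
    simpa using sq_norm_sub_mul s 1 (conj p)
  simp only [mul_pow, sq_norm_sub_mul (a s), hs_sub, hs_conj, norm_conj, conj_re, conj_im] at hsq
  nlinarith

/-! ### Wave functions of the isomonodromic linear system -/

/-- Transport of a wave function along an edge `d` of a discrete conformal map, where `σ` is the
spectral parameter attached to the direction of the edge. -/
def waveStep (σ d : ℂ) (p : ℂ × ℂ) : ℂ × ℂ := (p.1 - d * p.2, p.2 + σ / d * p.1)

/-- The wave function of the discrete power `f` with exponent `γ` at `(n, 0)`; the spectral
parameter of the horizontal edges is `I * s`. -/
def axisWave (γ : ℝ) (f : ℕ → ℕ → ℂ) (s : ℂ) : ℕ → ℂ × ℂ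
  | 0 => (s ^ ((-γ / 2 : ℝ) : ℂ), 1)
  | n + 1 => waveStep (I * s) (hEdge f n 0) (axisWave γ f s n)

/-- The wave function of the discrete power `f` with exponent `γ` at `(n, m)`; the spectral
parameter of the vertical edges is `-I * s`. -/
def wave (γ : ℝ) (f : ℕ → ℕ → ℂ) (s : ℂ) (n : ℕ) : ℕ → ℂ × ℂ
  | 0 => axisWave γ f s n
  | m + 1 => waveStep (-(I * s)) (vEdge f n m) (wave γ f s n m)

lemma waveStep_smul (σ d c : ℂ) (p : ℂ × ℂ) : waveStep σ d (c • p) = c • waveStep σ d p := by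
  ext <;> simp only [waveStep, Prod.smul_fst, Prod.smul_snd, smul_eq_mul] <;> ring

lemma IsDiscreteConformal.waveStep_comm {f : ℕ → ℕ → ℂ} (hf : IsDiscreteConformal f) (σ : ℂ)
    (n m : ℕ) (p : ℂ × ℂ) :
    waveStep (-σ) (vEdge f (n + 1) m) (waveStep σ (hEdge f n m) p) =
      waveStep σ (hEdge f n (m + 1)) (waveStep (-σ) (vEdge f n m) p) := by
  have hu := hf.hEdge_ne_zero n m
  have hv := hf.vEdge_ne_zero n m
  have hu' := hf.hEdge_ne_zero n (m + 1)
  have hv' := hf.vEdge_ne_zero (n + 1) m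
  have hmul := hf.hEdge_mul_hEdge n m
  have hadd : hEdge f n m + vEdge f (n + 1) m = vEdge f n m + hEdge f n (m + 1) := by
    simp only [hEdge, vEdge]; ring
  generalize hEdge f n m = u, vEdge f n m = v, hEdge f n (m + 1) = u', vEdge f (n + 1) m = v' at *
  ext
  · have : v' / u = -(u' / v) := by
      rw [← neg_div, div_eq_div_iff hu hv]
      linear_combination hmul
    simp only [waveStep]
    linear_combination -p.2 * hadd - σ * p.1 * this
  · have h₁ : u / v' = -(v / u') := by
      rw [← neg_div, div_eq_div_iff hv' hu']
      linear_combination hmul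
    have h₂ : 1 / u - 1 / v' = 1 / u' - 1 / v := by
      field_simp
      linear_combination (v' - v) * hmul - v * v' * hadd
    simp only [waveStep]
    linear_combination σ * p.2 * h₁ + σ * p.1 * h₂

/-- The pair `(e, g)` of holomorphic functions on the upper half plane is what remains of the wave
function at `(n, m)` after removing its zero at the node `s = I`. -/
structure IsNodalFactor (γ : ℝ) (f : ℕ → ℕ → ℂ) (n m : ℕ) (p : ℂ → ℂ × ℂ) : Prop where
  differentiableOn : DifferentiableOn ℂ p ℍₒ
  ne_zero : ∀ s ∈ ℍₒ, p s ≠ 0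
  wave_eq : ∀ s ∈ ℍₒ, wave γ f s n m = (1 + I * s) ^ n • p s
  apply_node : (p I).1 = hEdge f n m * (p I).2

lemma IsDiscreteConformal.wave_succ_left {f : ℕ → ℕ → ℂ} (hf : IsDiscreteConformal f) (γ : ℝ)
    (s : ℂ) (n m : ℕ) :
    wave γ f s (n + 1) m = waveStep (I * s) (hEdge f n m) (wave γ f s n m) := by
  induction m with
  | zero => rfl
  | succ m ih => rw [wave, ih, hf.waveStep_comm, wave]

lemma hasDerivAt_cpow_neg_half (γ : ℝ) {s : ℂ} (hs : s ∈ ℍₒ) :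
    HasDerivAt (fun z : ℂ => z ^ ((-γ / 2 : ℝ) : ℂ))
      (-(γ / (2 * s)) * s ^ ((-γ / 2 : ℝ) : ℂ)) s := by
  have hs' : s ∈ slitPlane := mem_slitPlane_iff.2 (Or.inr (ne_of_gt hs))
  refine (hasDerivAt_id s).cpow_const (c := ((-γ / 2 : ℝ) : ℂ)) hs' |>.congr_deriv ?_
  have hs0 := slitPlane_ne_zero hs'
  rw [id, cpow_sub _ _ hs0, cpow_one]
  push_cast
  field_simp

lemma hasDerivAt_waveStep {σ d s : ℂ} {e g : ℂ → ℂ} {e' g' : ℂ} (he : HasDerivAt e e' s)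
    (hg : HasDerivAt g g' s) :
    HasDerivAt (fun z => (waveStep (σ * z) d (e z, g z)).1) (e' - d * g') s ∧
      HasDerivAt (fun z => (waveStep (σ * z) d (e z, g z)).2) (g' + σ / d * (e s + s * e')) s := by
  refine ⟨he.sub (hg.const_mul d), ?_⟩
  have h := hg.add ((((hasDerivAt_id s).const_mul σ).div_const d).mul he)
  exact h.congr_deriv (by rw [id]; ring)

/-- The coefficient in the spectral differential system of the wave function along the axis, see
`IsDiscretePower.hasDerivAt_axisWave`. -/
def axisCoeff (f : ℕ → ℕ → ℂ) (n : ℕ) : ℂ := (n + 1) / (hEdge f (n + 1) 0 + hEdge f n 0)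

namespace IsDiscretePower

variable {γ : ℝ} {f : ℕ → ℕ → ℂ}

lemma axisCoeff_mul_add (hf : IsDiscretePower γ f) (n : ℕ) :
    axisCoeff f n * (hEdge f (n + 1) 0 + hEdge f n 0) = n + 1 :=
  div_mul_cancel₀ _ (hf.hEdge_add_hEdge_ne_zero n 0)

lemma axis_constraint_coeff (hf : IsDiscretePower γ f) (n : ℕ) :
    γ * (f n 0 + hEdge f n 0) = 2 * axisCoeff f n * (hEdge f (n + 1) 0 * hEdge f n 0) := by
  refine mul_right_cancel₀ (hf.hEdge_add_hEdge_ne_zero n 0) ?_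
  rw [hEdge, add_sub_cancel, ← hEdge]
  linear_combination hf.axis_constraint n -
    2 * (hEdge f (n + 1) 0 * hEdge f n 0) * hf.axisCoeff_mul_add n

lemma axisCoeff_zero (hf : IsDiscretePower γ f) :
    axisCoeff f 0 = (1 - γ / 2) / hEdge f 0 0 := by
  have hadd := hf.axisCoeff_mul_add 0
  have hmul := hf.axis_constraint_coeff 0
  rw [hf.map_zero_zero, zero_add] at hmul
  push_cast at hadd
  refine eq_div_of_mul_eq (hf.hEdge_ne_zero 0 0) (mul_left_cancel₀ (hf.hEdge_ne_zero 0 0) ?_)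
  linear_combination hEdge f 0 0 * hadd + 1 / 2 * hmul

lemma axisCoeff_succ (hf : IsDiscretePower γ f) (n : ℕ) :
    axisCoeff f (n + 1) = axisCoeff f n + (1 - γ / 2) / hEdge f (n + 1) 0 := by
  have hu := hf.hEdge_ne_zero (n + 1) 0
  have hadd := hf.axisCoeff_mul_add (n + 1)
  have hsub : axisCoeff f (n + 1) * hEdge f (n + 2) 0 =
      axisCoeff f n * hEdge f n 0 + γ / 2 := by
    have hsucc : f (n + 1) 0 = f n 0 + hEdge f n 0 := by rw [hEdge, add_sub_cancel]
    refine mul_left_cancel₀ hu ?_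
    linear_combination 1 / 2 * (hf.axis_constraint_coeff n -
      hf.axis_constraint_coeff (n + 1) + γ * hsucc)
  push_cast at hadd
  rw [← sub_eq_iff_eq_add', eq_div_iff hu]
  linear_combination hadd - hf.axisCoeff_mul_add n - hsub

/-- The differential system in the spectral parameter satisfied by the wave function: this is where
the constraint enters. -/
theorem hasDerivAt_axisWave (hf : IsDiscretePower γ f) (n : ℕ) {s : ℂ} (hs : s ∈ ℍₒ) :
    HasDerivAt (fun z => (axisWave γ f z (n + 1)).1)
        (-(γ / (2 * s)) * ((axisWave γ f s n).1 + f n 0 * (axisWave γ f s n).2)) s ∧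
      HasDerivAt (fun z => (axisWave γ f z (n + 1)).2)
        (I * axisCoeff f n * (axisWave γ f s n).1) s := by
  have hs0 := slitPlane_ne_zero (mem_slitPlane_iff.2 (Or.inr (ne_of_gt hs)))
  have hu (k : ℕ) := hf.hEdge_ne_zero k 0
  induction n with
  | zero =>
    have h := hasDerivAt_waveStep (σ := I) (d := hEdge f 0 0) (hasDerivAt_cpow_neg_half γ hs)
      (hasDerivAt_const s 1)
    refine ⟨h.1.congr_deriv ?_, h.2.congr_deriv ?_⟩
    · simp [axisWave, hf.map_zero_zero]
    · rw [hf.axisCoeff_zero, axisWave]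
      field_simp
      ring
  | succ n ih =>
    have h := hasDerivAt_waveStep (σ := I) (d := hEdge f (n + 1) 0) ih.1 ih.2
    have hmul := hf.axis_constraint_coeff n
    have hsucc : f (n + 1) 0 = f n 0 + hEdge f n 0 := by rw [hEdge, add_sub_cancel]
    refine ⟨h.1.congr_deriv ?_, h.2.congr_deriv ?_⟩
    · have := hu n
      simp only [axisWave, waveStep, hsucc]
      field_simp
      linear_combination (I * s * (axisWave γ f s n).1) * hmul
    · have := hu n
      have := hu (n + 1)
      simp only [axisWave, waveStep, hf.axisCoeff_succ]
      field_simp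
      linear_combination -(axisWave γ f s n).2 * hmul

end IsDiscretePower

/-! ### Factoring out the zero of the wave function -/

lemma I_mem_upperHalfPlaneSet : I ∈ ℍₒ := show 0 < I.im by simp

lemma upperHalfPlaneSet_mem_nhds {s : ℂ} (hs : s ∈ ℍₒ) : ℍₒ ∈ nhds s :=
  (isOpen_im_gt 0).mem_nhds hs

lemma one_add_I_mul_eq (s : ℂ) : 1 + I * s = I * (s - I) := by
  linear_combination I_mul_I

lemma one_add_I_mul_ne_zero {s : ℂ} (hs : s ≠ I) : 1 + I * s ≠ 0 := by
  rw [one_add_I_mul_eq]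
  exact mul_ne_zero I_ne_zero (sub_ne_zero.2 hs)

lemma exists_eq_one_add_I_mul {h : ℂ → ℂ} (hh : DifferentiableOn ℂ h ℍₒ) (hI : h I = 0) :
    ∃ k : ℂ → ℂ, DifferentiableOn ℂ k ℍₒ ∧ ∀ s, h s = (1 + I * s) * k s := by
  refine ⟨fun s => -I * dslope h I s,
    ((differentiableOn_dslope (upperHalfPlaneSet_mem_nhds I_mem_upperHalfPlaneSet)).2
      hh).const_mul _, fun s => ?_⟩
  have hslope := sub_smul_dslope h I s
  rw [hI, sub_zero, smul_eq_mul] at hslope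
  rw [one_add_I_mul_eq]
  linear_combination -hslope + (s - I) * dslope h I s * I_mul_I

lemma apply_I_eq_of_eq_of_ne {h k : ℂ → ℂ} (hh : DifferentiableOn ℂ h ℍₒ)
    (hk : DifferentiableOn ℂ k ℍₒ) (heq : ∀ s ∈ ℍₒ, s ≠ I → h s = k s) : h I = k I := by
  have hI := upperHalfPlaneSet_mem_nhds I_mem_upperHalfPlaneSet
  refine (((hh.differentiableAt hI).continuousAt.eventuallyEq_nhds_iff_eventuallyEq_nhdsNE
    (hk.differentiableAt hI).continuousAt).1 ?_).eq_of_nhds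
  filter_upwards [self_mem_nhdsWithin, nhdsWithin_le_nhds hI] with s hsI hs
  exact heq s hs hsI

namespace IsNodalFactor

variable {γ : ℝ} {f : ℕ → ℕ → ℂ} {n : ℕ} {p : ℂ → ℂ × ℂ}

/-- The value at the node of the new nodal factor is read off the differential system divided by
the zero of the wave function. -/
lemma mul_hEdge_add_hEdge_eq (hp : IsNodalFactor γ f n 0 p) (hf : IsDiscretePower γ f) {g : ℂ → ℂ}
    (hg : DifferentiableOn ℂ g ℍₒ)
    (hwave : ∀ s ∈ ℍₒ, (axisWave γ f s (n + 1)).2 = (1 + I * s) ^ (n + 1) * g s) :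
    g I * (hEdge f (n + 1) 0 + hEdge f n 0) = (p I).1 := by
  have hd := hf.hEdge_add_hEdge_ne_zero n 0
  have hn : (n + 1 : ℂ) ≠ 0 := n.cast_add_one_ne_zero
  have hoff : ∀ s ∈ ℍₒ, s ≠ I → g s + (1 + I * s) / (I * (n + 1)) * deriv g s =
      (p s).1 / (hEdge f (n + 1) 0 + hEdge f n 0) := by
    intro s hs hsI
    have hnhds := upperHalfPlaneSet_mem_nhds hs
    have hprod : HasDerivAt (fun z => (1 + I * z) ^ (n + 1) * g z)
        ((n + 1) * (1 + I * s) ^ n * I * g s + (1 + I * s) ^ (n + 1) * deriv g s) s := by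
      have hlin := ((hasDerivAt_id s).const_mul I).const_add 1
      simpa using (hlin.fun_pow (n + 1)).fun_mul (hg.differentiableAt hnhds).hasDerivAt
    have hderiv := (hf.hasDerivAt_axisWave n hs).2.unique
      (hprod.congr_of_eventuallyEq (Filter.eventually_of_mem hnhds hwave))
    have hfst : (axisWave γ f s n).1 = (1 + I * s) ^ n * (p s).1 :=
      congrArg Prod.fst (hp.wave_eq s hs)
    rw [hfst, pow_succ, axisCoeff] at hderiv
    refine mul_left_cancel₀ (pow_ne_zero n (one_add_I_mul_ne_zero hsI)) ?_
    have := I_ne_zero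
    field_simp at hderiv ⊢
    linear_combination -hderiv
  have hI := apply_I_eq_of_eq_of_ne
    (hg.add (.mul (by fun_prop) (hg.deriv (isOpen_im_gt 0))))
    (hp.differentiableOn.fst.div_const _) hoff
  rw [← eq_div_iff hd]
  simpa using hI

lemma zero_zero (hf : IsDiscretePower γ f) (h₁₀ : f 1 0 = I ^ ((-γ / 2 : ℝ) : ℂ)) :
    IsNodalFactor γ f 0 0 fun s => (s ^ ((-γ / 2 : ℝ) : ℂ), 1) where
  differentiableOn := DifferentiableOn.prodMk
    (fun _ hs => (hasDerivAt_cpow_neg_half γ hs).differentiableAt.differentiableWithinAt)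
    (differentiableOn_const 1)
  ne_zero _ _ h := one_ne_zero (congrArg Prod.snd h)
  wave_eq := by simp [wave, axisWave]
  apply_node := by simp [hEdge, hf.map_zero_zero, h₁₀]

lemma exists_axis_succ (hp : IsNodalFactor γ f n 0 p) (hf : IsDiscretePower γ f) :
    ∃ q, IsNodalFactor γ f (n + 1) 0 q := by
  have hu := hf.hEdge_ne_zero n 0
  obtain ⟨e, he, hpe⟩ := exists_eq_one_add_I_mul (h := fun s => (p s).1 - hEdge f n 0 * (p s).2)
    (hp.differentiableOn.fst.sub (hp.differentiableOn.snd.const_mul _))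
    (sub_eq_zero.2 hp.apply_node)
  let g (s : ℂ) : ℂ := (p s).2 + I * s / hEdge f n 0 * e s
  have hg : DifferentiableOn ℂ g ℍₒ := hp.differentiableOn.snd.add (.mul (by fun_prop) he)
  have hstep (s : ℂ) : waveStep (I * s) (hEdge f n 0) (p s) = (1 + I * s) • (e s, g s) := by
    ext
    · exact hpe s
    · simp only [waveStep, Prod.smul_snd, smul_eq_mul, g]
      field_simp
      linear_combination (I * s) * hpe s
  have hwave : ∀ s ∈ ℍₒ, wave γ f s (n + 1) 0 = (1 + I * s) ^ (n + 1) • (e s, g s) := by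
    intro s hs
    rw [pow_succ, mul_smul, ← hstep, ← waveStep_smul, ← hp.wave_eq s hs]
    rfl
  refine ⟨fun s => (e s, g s), he.prodMk hg, fun s hs h => hp.ne_zero s hs ?_, hwave, ?_⟩
  · have hes : e s = 0 := congrArg Prod.fst h
    have hgs : g s = 0 := congrArg Prod.snd h
    have h₂ : (p s).2 = 0 := by simpa [g, hes] using hgs
    exact Prod.ext (by simpa [hes, h₂] using hpe s) h₂
  · have hnode := hp.mul_hEdge_add_hEdge_eq hf hg fun s hs => congrArg Prod.snd (hwave s hs)
    have heI : e I = hEdge f n 0 * ((p I).2 - g I) := by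
      simp only [g]
      field_simp
      linear_combination e I * I_mul_I
    linear_combination heI - hp.apply_node - hnode

lemma succ {m : ℕ} (hp : IsNodalFactor γ f n m p) (hf : IsDiscreteConformal f) :
    IsNodalFactor γ f n (m + 1) fun s => waveStep (-(I * s)) (vEdge f n m) (p s) where
  differentiableOn := by
    have h₁ := hp.differentiableOn.fst
    have h₂ := hp.differentiableOn.snd
    exact .prodMk (by fun_prop) (by fun_prop)
  ne_zero s hs h := by
    have hv := hf.vEdge_ne_zero n m
    have hdet : 1 - I * s ≠ 0 := fun h0 => by
      have hre : 1 + s.im = 0 := by simpa using congrArg re h0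
      have him : 0 < s.im := hs
      linarith
    have h₁ : (p s).1 = vEdge f n m * (p s).2 := sub_eq_zero.1 (congrArg Prod.fst h)
    have h₂ : (p s).2 + -(I * s) / vEdge f n m * (p s).1 = 0 := congrArg Prod.snd h
    have h₃ : (1 - I * s) * (p s).2 = 0 := by
      rw [h₁] at h₂
      field_simp at h₂
      linear_combination h₂
    have h₄ := (mul_eq_zero.1 h₃).resolve_left hdet
    exact hp.ne_zero s hs (Prod.ext (by rw [h₁, h₄, mul_zero]; rfl) h₄)
  wave_eq s hs := by rw [wave, hp.wave_eq s hs, waveStep_smul]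
  apply_node := by
    have hv := hf.vEdge_ne_zero n m
    simp only [waveStep, hp.apply_node]
    field_simp
    rw [I_sq]
    linear_combination -(p I).2 * hf.hEdge_succ_mul n m

end IsNodalFactor

theorem IsDiscretePower.exists_isNodalFactor {γ : ℝ} {f : ℕ → ℕ → ℂ} (hf : IsDiscretePower γ f)
    (h₁₀ : f 1 0 = I ^ ((-γ / 2 : ℝ) : ℂ)) (n m : ℕ) : ∃ p, IsNodalFactor γ f n m p := by
  induction m with
  | zero =>
    induction n with
    | zero => exact ⟨_, .zero_zero hf h₁₀⟩
    | succ n ih => exact ih.elim fun _ hp => hp.exists_axis_succ hf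
  | succ m ih => exact ih.elim fun _ hp => ⟨_, hp.succ hf.toIsDiscreteConformal⟩

/-! ### Positivity along the diagonal -/

/-- For `s` in the upper half plane, the ratio `p.1 / p.2` lies in the closed sector
`-arg s ≤ arg ≤ 0`; stated without division so as to allow `p.2 = 0`. -/
def InSector (s : ℂ) (p : ℂ × ℂ) : Prop :=
  (p.1 * conj p.2).im ≤ 0 ∧ 0 ≤ (s * (p.1 * conj p.2)).im

lemma InSector.smul {s : ℂ} {p : ℂ × ℂ} (h : InSector s p) (c : ℂ) : InSector s (c • p) := by
  have hc : (c • p).1 * conj (c • p).2 = (normSq c : ℂ) * (p.1 * conj p.2) := by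
    simp only [Prod.smul_fst, Prod.smul_snd, smul_eq_mul, map_mul, ← mul_conj]
    ring
  rw [InSector, hc, mul_left_comm s, im_ofReal_mul, im_ofReal_mul]
  exact ⟨mul_nonpos_of_nonneg_of_nonpos (normSq_nonneg c) h.1, mul_nonneg (normSq_nonneg c) h.2⟩

lemma InSector.div_ofReal {s x y : ℂ} (h : InSector s (x, y)) {a b : ℝ} (ha : 0 < a) (hb : 0 < b) :
    InSector s (x / a, y / b) := by
  have hab : x / a * conj (y / b) = ((a * b)⁻¹ : ℝ) * (x * conj y) := by
    rw [map_div₀, conj_ofReal]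
    push_cast
    ring
  have hpos : 0 < (a * b)⁻¹ := by positivity
  rw [InSector, hab, mul_left_comm s, im_ofReal_mul, im_ofReal_mul]
  exact ⟨mul_nonpos_of_nonneg_of_nonpos hpos.le h.1, mul_nonneg hpos.le h.2⟩

lemma inSector_cpow {γ : ℝ} (hγ₀ : 0 ≤ γ) (hγ₂ : γ ≤ 2) {s : ℂ} (hs : s ∈ ℍₒ) :
    InSector s (s ^ ((-γ / 2 : ℝ) : ℂ), 1) := by
  have harg := arg_nonneg_iff.2 (le_of_lt hs : 0 ≤ s.im)
  have hpi := arg_le_pi s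
  have hs0 := slitPlane_ne_zero (mem_slitPlane_iff.2 (Or.inr (ne_of_gt hs)))
  simp only [InSector, map_one, mul_one]
  constructor
  · rw [cpow_ofReal_im]
    refine mul_nonpos_of_nonneg_of_nonpos (by positivity) ?_
    exact Real.sin_nonpos_of_nonpos_of_neg_pi_le (by nlinarith) (by nlinarith)
  · have h : s * s ^ ((-γ / 2 : ℝ) : ℂ) = s ^ ((-γ / 2 + 1 : ℝ) : ℂ) := by
      rw [ofReal_add, ofReal_one, cpow_add _ _ hs0, cpow_one, mul_comm]
    rw [h, cpow_ofReal_im]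
    refine mul_nonneg (by positivity) ?_
    exact Real.sin_nonneg_of_nonneg_of_le_pi (by nlinarith) (by nlinarith)

lemma waveStep_waveStep_of_kite {a b : ℝ} (ha : a ≠ 0) (hb : b ≠ 0) (s e g : ℂ) {u v : ℂ}
    (hu : u = a - b * I) (hv : v * (2 * a) = 2 * b * I * u) :
    waveStep (-(I * s)) v (waveStep (I * s) u (e, g)) =
      (((a + b * s) * e - (a ^ 2 + b ^ 2) * g) / a, ((a * s + b) * g - s * e) / b) := by
  have ha' : (a : ℂ) ≠ 0 := ofReal_ne_zero.2 ha
  have hb' : (b : ℂ) ≠ 0 := ofReal_ne_zero.2 hb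
  have hu0 : u ≠ 0 := fun h => by
    rw [h] at hu
    exact ha (by simpa using (congrArg re hu).symm)
  have hv' : v = b * I * u / a := by
    field_simp
    linear_combination hv / 2
  have hI : I ^ 2 = -1 := I_sq
  ext
  · simp only [waveStep, hv']
    field_simp
    linear_combination (-e * b * s + g * b ^ 2) * hI - g * (a + b * I) * hu
  · simp only [waveStep, hv']
    field_simp
    linear_combination s * e * hu

lemma im_diagonal_eq (a b : ℝ) (s e g : ℂ) :
    (((a + b * s) * e - (a ^ 2 + b ^ 2) * g) * conj ((a * s + b) * g - s * e)).im =
      a * (s.im * (‖e‖ ^ 2 + (a ^ 2 + b ^ 2) * ‖g‖ ^ 2 - 2 * a * (e * conj g).re) +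
        b * (‖s‖ ^ 2 + 1) * (e * conj g).im) := by
  simp only [Complex.sq_norm, normSq_apply]
  simp only [pow_two, mul_re, mul_im, add_re, add_im, sub_re, sub_im, conj_re, conj_im, ofReal_re,
    ofReal_im]
  ring

lemma im_mul_diagonal_eq (a b : ℝ) (s e g : ℂ) :
    (s * (((a + b * s) * e - (a ^ 2 + b ^ 2) * g) * conj ((a * s + b) * g - s * e))).im =
      b * (a * (‖s‖ ^ 2 + 1) * (s * e * conj g).im -
        s.im * (‖s * e‖ ^ 2 + (a ^ 2 + b ^ 2) * ‖g‖ ^ 2 - 2 * b * (s * e * conj g).re)) := by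
  simp only [Complex.sq_norm, normSq_apply]
  simp only [pow_two, mul_re, mul_im, add_re, add_im, sub_re, sub_im, conj_re, conj_im, ofReal_re,
    ofReal_im]
  ring

namespace IsNodalFactor

variable {γ : ℝ} {f : ℕ → ℕ → ℂ} {n m : ℕ} {p : ℂ → ℂ × ℂ}

lemma inSector (hp : IsNodalFactor γ f n m p) (h : ∀ s ∈ ℍₒ, InSector s (wave γ f s n m)) :
    ∀ s ∈ ℍₒ, InSector s (p s) := by
  have hoff : ∀ s ∈ ℍₒ, s ≠ I → InSector s (p s) := by
    intro s hs hsI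
    have hs' := (h s hs).smul ((1 + I * s) ^ n)⁻¹
    rwa [hp.wave_eq s hs, inv_smul_smul₀ (pow_ne_zero n (one_add_I_mul_ne_zero hsI))] at hs'
  intro s hs
  rcases ne_or_eq s I with hsI | rfl
  · exact hoff s hs hsI
  have hnhds := upperHalfPlaneSet_mem_nhds hs
  have hcont := (hp.differentiableOn.differentiableAt hnhds).continuousAt
  have hev : ∀ᶠ z in nhdsWithin I {I}ᶜ, InSector z (p z) := by
    filter_upwards [self_mem_nhdsWithin, nhdsWithin_le_nhds hnhds] with z hzI hz
    exact hoff z hz hzI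
  have hX : ContinuousAt (fun z => (p z).1 * conj (p z).2) I :=
    hcont.fst.mul (continuous_conj.continuousAt.comp hcont.snd)
  exact ⟨le_of_tendsto ((continuous_im.continuousAt.comp hX).continuousWithinAt)
      (hev.mono fun z hz => hz.1),
    ge_of_tendsto ((continuous_im.continuousAt.comp (continuousAt_id.mul hX)).continuousWithinAt)
      (hev.mono fun z hz => hz.2)⟩

lemma hEdge_nonneg_and_nonpos (hp : IsNodalFactor γ f n m p) (h : InSector I (p I)) :
    0 ≤ (hEdge f n m).re ∧ (hEdge f n m).im ≤ 0 := by
  have hg : 0 < normSq (p I).2 := normSq_pos.2 fun h0 =>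
    hp.ne_zero I I_mem_upperHalfPlaneSet (Prod.ext (by rw [hp.apply_node, h0, mul_zero]; rfl) h0)
  rw [InSector, hp.apply_node, mul_assoc, mul_conj, ← mul_assoc, im_mul_ofReal, im_mul_ofReal,
    I_mul_im] at h
  exact ⟨nonneg_of_mul_nonneg_left h.2 hg, by nlinarith [h.1]⟩

lemma schwarzPick (hp : IsNodalFactor γ f n m p) (h : ∀ s ∈ ℍₒ, InSector s (p s))
    (him : (hEdge f n m).im < 0) {s : ℂ} (hs : s ∈ ℍₒ) :
    s.im * (‖(p s).1‖ ^ 2 + ‖hEdge f n m‖ ^ 2 * ‖(p s).2‖ ^ 2 -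
        2 * (hEdge f n m).re * ((p s).1 * conj (p s).2).re) ≤
      (hEdge f n m).im * (‖s‖ ^ 2 + 1) * ((p s).1 * conj (p s).2).im := by
  have hdiff := hp.differentiableOn
  have hle := schwarzPick_of_ratio (a := fun z => -(p z).1) (b := fun z => (p z).2)
    (w := -hEdge f n m) I_mem_upperHalfPlaneSet hs hdiff.fst.neg hdiff.snd
    (fun z hz h0 => hp.ne_zero z hz (Prod.ext (neg_eq_zero.1 h0.1) h0.2))
    (fun z hz => by simpa only [neg_mul, neg_im, neg_nonneg] using (h z hz).1) (by simpa using him)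
    (by rw [hp.apply_node, neg_mul])
  simp only [norm_neg, norm_I, I_re, I_im, neg_re, neg_im, neg_mul] at hle
  linarith

lemma schwarzPick_mul (hp : IsNodalFactor γ f n m p) (h : ∀ s ∈ ℍₒ, InSector s (p s))
    (hre : 0 < (hEdge f n m).re) {s : ℂ} (hs : s ∈ ℍₒ) :
    s.im * (‖s * (p s).1‖ ^ 2 + ‖hEdge f n m‖ ^ 2 * ‖(p s).2‖ ^ 2 +
        2 * (hEdge f n m).im * (s * (p s).1 * conj (p s).2).re) ≤
      (hEdge f n m).re * (‖s‖ ^ 2 + 1) * (s * (p s).1 * conj (p s).2).im := by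
  have hdiff := hp.differentiableOn
  have hne : ∀ z ∈ ℍₒ, z ≠ 0 := fun z hz h0 => (ne_of_gt hz : z.im ≠ 0) (by rw [h0, zero_im])
  have hle := schwarzPick_of_ratio (a := fun z => z * (p z).1) (b := fun z => (p z).2)
    (w := I * hEdge f n m) I_mem_upperHalfPlaneSet hs (differentiableOn_id.mul hdiff.fst) hdiff.snd
    (fun z hz h0 => hp.ne_zero z hz (Prod.ext ((mul_eq_zero.1 h0.1).resolve_left (hne z hz)) h0.2))
    (fun z hz => by simpa only [mul_assoc] using (h z hz).2) (by simpa using hre)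
    (by rw [hp.apply_node, mul_assoc])
  rw [norm_mul I] at hle
  simp only [norm_I, I_re, I_im, I_mul_re, I_mul_im] at hle
  linarith

lemma inSector_wave_succ_succ (hp : IsNodalFactor γ f n n p) (hf : IsDiscreteConformal f)
    (hv : vEdge f n n = conj (hEdge f n n)) (hre : 0 < (hEdge f n n).re)
    (him : (hEdge f n n).im < 0) (h : ∀ s ∈ ℍₒ, InSector s (p s)) :
    ∀ s ∈ ℍₒ, InSector s (wave γ f s (n + 1) (n + 1)) := by
  intro s hs
  have hupper := hp.schwarzPick h him hs
  have hlower := hp.schwarzPick_mul h hre hs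
  obtain ⟨a, b, hu⟩ : ∃ a b : ℝ, hEdge f n n = a - b * I :=
    ⟨(hEdge f n n).re, -(hEdge f n n).im, by simp⟩
  have hv' : vEdge f (n + 1) n * (2 * a) = 2 * b * I * hEdge f n n := by
    have hmul := hf.vEdge_succ_mul n n
    simp only [hv, hu, map_sub, map_mul, conj_ofReal, conj_I] at hmul ⊢
    linear_combination hmul
  have hnorm : ‖hEdge f n n‖ ^ 2 = a ^ 2 + b ^ 2 := by
    rw [hu, Complex.sq_norm, normSq_apply]
    simp [pow_two]
  have hu_re : (hEdge f n n).re = a := by simp [hu]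
  have hu_im : (hEdge f n n).im = -b := by simp [hu]
  rw [hnorm, hu_re, hu_im] at hupper hlower
  rw [hu_re] at hre
  rw [hu_im, neg_lt_zero] at him
  rw [wave, hf.wave_succ_left, hp.wave_eq s hs, waveStep_smul, waveStep_smul,
    waveStep_waveStep_of_kite hre.ne' him.ne' s _ _ hu hv']
  refine (InSector.div_ofReal ?_ hre him).smul _
  rw [InSector, im_diagonal_eq, im_mul_diagonal_eq]
  exact ⟨mul_nonpos_of_nonneg_of_nonpos hre.le (by linarith),
    mul_nonneg him.le (by linarith)⟩

end IsNodalFactor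

lemma vEdge_self_of_reflect_eq {f : ℕ → ℕ → ℂ} (hsymm : reflect f = f) (n : ℕ) :
    vEdge f n n = conj (hEdge f n n) := by
  rw [← vEdge_reflect, hsymm]

namespace IsDiscretePower

variable {γ : ℝ} {f : ℕ → ℕ → ℂ}

lemma hEdge_self_re_pos_and_im_neg (hf : IsDiscretePower γ f) (hsymm : reflect f = f) {n : ℕ}
    {p : ℂ → ℂ × ℂ} (hp : IsNodalFactor γ f n n p) (h : InSector I (p I)) :
    0 < (hEdge f n n).re ∧ (hEdge f n n).im < 0 := by
  have hv := vEdge_self_of_reflect_eq hsymm n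
  obtain ⟨hre, him⟩ := hp.hEdge_nonneg_and_nonpos h
  refine ⟨hre.lt_of_ne' fun h0 => hf.hEdge_add_vEdge_ne_zero n n ?_,
    him.lt_of_ne fun h0 => hf.hEdge_sub_vEdge_ne_zero n n ?_⟩
  · rw [hv, add_conj, h0, mul_zero, ofReal_zero]
  · rw [hv, sub_conj, h0, mul_zero, ofReal_zero, zero_mul]

theorem inSector_wave_self (hf : IsDiscretePower γ f) (hsymm : reflect f = f) (hγ₀ : 0 ≤ γ)
    (hγ₂ : γ ≤ 2) (h₁₀ : f 1 0 = I ^ ((-γ / 2 : ℝ) : ℂ)) (n : ℕ) :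
    ∀ s ∈ ℍₒ, InSector s (wave γ f s n n) := by
  induction n with
  | zero => exact fun s hs => inSector_cpow hγ₀ hγ₂ hs
  | succ n ih =>
    obtain ⟨p, hp⟩ := hf.exists_isNodalFactor h₁₀ n n
    have hsector := hp.inSector ih
    obtain ⟨hre, him⟩ :=
      hf.hEdge_self_re_pos_and_im_neg hsymm hp (hsector I I_mem_upperHalfPlaneSet)
    exact hp.inSector_wave_succ_succ hf.toIsDiscreteConformal (vEdge_self_of_reflect_eq hsymm n)
      hre him hsector

theorem hEdge_self_mem_fourth_quadrant (hf : IsDiscretePower γ f) (hsymm : reflect f = f)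
    (hγ₀ : 0 ≤ γ) (hγ₂ : γ ≤ 2) (h₁₀ : f 1 0 = I ^ ((-γ / 2 : ℝ) : ℂ)) (n : ℕ) :
    0 < (hEdge f n n).re ∧ (hEdge f n n).im < 0 := by
  obtain ⟨p, hp⟩ := hf.exists_isNodalFactor h₁₀ n n
  exact hf.hEdge_self_re_pos_and_im_neg hsymm hp
    (hp.inSector (hf.inSector_wave_self hsymm hγ₀ hγ₂ h₁₀ n) I I_mem_upperHalfPlaneSet)

end IsDiscretePower

/-! ### Propagation of positivity away from the diagonal -/

lemma eq_I_mul_im {w : ℂ} (hw : w.re = 0) : w = I * w.im := by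
  apply Complex.ext <;> simp [hw]

lemma one_add_I_mul_ofReal_ne_zero (t : ℝ) : 1 + I * (t : ℂ) ≠ 0 := fun h => by
  simpa using congrArg re h

lemma one_sub_I_mul_ofReal_ne_zero (t : ℝ) : 1 - I * (t : ℂ) ≠ 0 := fun h => by
  simpa using congrArg re h

lemma one_add_quarterTurn_div_inv_im {s t : ℝ}
    (h : 1 + quarterTurn (I * s) / quarterTurn (I * t) ≠ 0) :
    1 + s * t ≠ 0 ∧
      (1 + quarterTurn (I * s) / quarterTurn (I * t))⁻¹.im = (t - s) / (2 * (1 + s * t)) := by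
  have hs := one_sub_I_mul_ofReal_ne_zero s
  have ht := one_add_I_mul_ofReal_ne_zero t
  have hsum : 1 + quarterTurn (I * s) / quarterTurn (I * t) =
      (2 * (1 + s * t) : ℝ) / ((1 - I * s) * (1 + I * t)) := by
    have := one_sub_I_mul_ofReal_ne_zero t
    simp only [quarterTurn]
    field_simp
    push_cast
    linear_combination (-2 * s * t : ℂ) * I_sq
  rw [hsum] at h ⊢
  refine ⟨fun h0 => h (by rw [h0]; simp), ?_⟩
  rw [inv_div, div_ofReal_im]
  congr 1
  simp only [mul_im, sub_re, sub_im, add_re, add_im, one_re, one_im, mul_re, I_re, I_im, ofReal_re,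
    ofReal_im]
  ring

lemma inv_quarterTurn_sub_inv_im (s t : ℝ) :
    ((quarterTurn (I * t))⁻¹ - quarterTurn (I * s))⁻¹.im = (1 + s * t) / (2 * (s + t)) := by
  have hs := one_sub_I_mul_ofReal_ne_zero s
  have ht := one_add_I_mul_ofReal_ne_zero t
  have hdiff : (quarterTurn (I * t))⁻¹ - quarterTurn (I * s) =
      -I * ((2 * (s + t) : ℝ) / ((1 - I * s) * (1 + I * t))) := by
    have := one_sub_I_mul_ofReal_ne_zero t
    simp only [quarterTurn]
    field_simp
    push_cast
    ring
  rw [hdiff, mul_inv, inv_neg, inv_I, neg_neg, inv_div, ← mul_div_assoc, div_ofReal_im]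
  congr 1
  simp

lemma inv_add_inv_inv_im {s t : ℝ} (hs : s ≠ 0) (ht : t ≠ 0) :
    ((I * t)⁻¹ + (I * s)⁻¹ : ℂ)⁻¹.im = s * t / (s + t) := by
  have hsum : ((I * t)⁻¹ + (I * s)⁻¹ : ℂ) = -I * (s⁻¹ + t⁻¹ : ℝ) := by
    push_cast
    rw [mul_inv, mul_inv, inv_I]
    ring
  rw [hsum, mul_inv, inv_neg, inv_I, neg_neg, ← ofReal_inv, im_mul_ofReal, I_im, one_mul,
    inv_add_inv hs ht, inv_div]

lemma quarterTurn_quarterTurn {w : ℂ} (hw : w ≠ 1) : quarterTurn (quarterTurn w) = -w⁻¹ := by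
  have h : 1 - w ≠ 0 := sub_ne_zero.2 hw.symm
  rw [quarterTurn, quarterTurn, one_add_div h, one_sub_div h, div_div_div_cancel_right₀ h,
    ← one_div, ← div_neg, ← mul_div_mul_left 1 (-w) two_ne_zero]
  ring_nf

lemma pos_of_angle_balance {n m r s t : ℝ} (hm : 0 < m) (hmn : m ≤ n) (hs : 0 < s) (ht : 0 < t)
    (h : n * (r - t) * (s + t) = m * (1 - s * t) * (1 + r * t)) : 0 < r := by
  have hn : 0 < n := hm.trans_le hmn
  have : 0 ≤ n - m := sub_nonneg.2 hmn
  have hr : (n * s + (n - m) * t + m * (s * t ^ 2)) * r = m + (n - m) * (s * t) + n * t ^ 2 := by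
    linear_combination h
  have hcoef : 0 < n * s + (n - m) * t + m * (s * t ^ 2) := by positivity
  rw [← mul_pos_iff_of_pos_left hcoef, hr]
  positivity

namespace IsDiscreteConformal

variable {f : ℕ → ℕ → ℂ}

lemma cornerRatio_im_pos_of_odd (hf : IsDiscreteConformal f)
    (hkite : ∀ n m, IsKiteRatio (n + m) (cornerRatio f n m)) {n m : ℕ} (hodd : Odd (n + m))
    (h₀ : 0 < (cornerRatio f n m).im) (h₁ : 0 < (cornerRatio f n (m + 1)).im)
    (h₂ : 0 < (cornerRatio f (n + 1) (m + 1)).im) : 0 < (cornerRatio f (n + 1) m).im := by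
  have hodd' : Odd (n + m + 2) := by simpa [parity_simps] using hodd
  have hre₂ : (cornerRatio f (n + 1) (m + 1)).re = 0 :=
    (hkite _ _).2 (add_add_add_comm n m 1 1 ▸ hodd')
  have hre₁ : (quarterTurn (cornerRatio f n (m + 1))).re = 0 :=
    (hkite n (m + 1)).quarterTurn.2 hodd'
  have hre₀ : (-(cornerRatio f n m)⁻¹).re = 0 := (hkite n m).neg_inv.2 hodd
  have hre₃ : (-(quarterTurn (cornerRatio f (n + 1) m))⁻¹).re = 0 :=
    (hkite (n + 1) m).quarterTurn.neg_inv.2 (add_right_comm n 1 m ▸ hodd')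
  have h := congrArg re (hf.vertex_mul_eq_one n m)
  simp only [mul_re, mul_im, hre₀, hre₁, hre₂, hre₃, one_re] at h
  rw [← quarterTurn_im_pos, ← neg_inv_im_pos]
  rw [← mul_pos_iff_of_pos_left
    (mul_pos (mul_pos h₂ (quarterTurn_im_pos.2 h₁)) (neg_inv_im_pos.2 h₀))]
  linarith

lemma inv_vEdge_eq (hf : IsDiscreteConformal f) (n m : ℕ) :
    (vEdge f n m)⁻¹ = (quarterTurn (cornerRatio f n m))⁻¹ * (hEdge f n (m + 1))⁻¹ := by
  have := hf.hEdge_succ_div_neg_vEdge n m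
  rw [div_neg, neg_inj] at this
  rw [← this, div_mul_eq_mul_div, mul_inv_cancel₀ (hf.hEdge_ne_zero n (m + 1)), one_div]

lemma inv_vEdge_succ_right_eq (hf : IsDiscreteConformal f) (n m : ℕ) :
    (vEdge f n (m + 1))⁻¹ = (cornerRatio f n (m + 1))⁻¹ * (hEdge f n (m + 1))⁻¹ := by
  rw [cornerRatio, inv_div, div_mul_eq_mul_div, mul_inv_cancel₀ (hf.hEdge_ne_zero n (m + 1)),
    one_div]

lemma inv_vEdge_succ_succ_eq (hf : IsDiscreteConformal f) (n m : ℕ) :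
    (vEdge f (n + 1) (m + 1))⁻¹ =
      -quarterTurn (cornerRatio f n (m + 1)) * (hEdge f n (m + 1))⁻¹ := by
  rw [← hf.neg_hEdge_div_vEdge_succ, neg_div, neg_neg, div_mul_eq_mul_div,
    mul_inv_cancel₀ (hf.hEdge_ne_zero n (m + 1)), one_div]

lemma inv_vEdge_succ_left_eq (hf : IsDiscreteConformal f) (n m : ℕ) :
    (vEdge f (n + 1) m)⁻¹ =
      (quarterTurn (quarterTurn (cornerRatio f n m)))⁻¹ * (hEdge f n (m + 1))⁻¹ := by
  have hw : cornerRatio f n m ≠ 1 := fun hw => hf.hEdge_sub_vEdge_ne_zero n m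
    (sub_eq_zero.2 ((div_eq_one_iff_eq (hf.hEdge_ne_zero n m)).1 hw).symm)
  rw [quarterTurn_quarterTurn hw, ← hf.vEdge_succ_div_hEdge_succ, inv_div, div_mul_eq_mul_div,
    mul_inv_cancel₀ (hf.hEdge_ne_zero n (m + 1)), one_div]

lemma inv_hEdge_succ_succ_eq (hf : IsDiscreteConformal f) (n m : ℕ) :
    (hEdge f (n + 1) (m + 1))⁻¹ = quarterTurn (cornerRatio f (n + 1) m) /
      quarterTurn (quarterTurn (cornerRatio f n m)) * (hEdge f n (m + 1))⁻¹ := by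
  have := hf.hEdge_succ_div_neg_vEdge (n + 1) m
  rw [div_neg, neg_inj] at this
  rw [div_eq_mul_inv, mul_assoc, ← hf.inv_vEdge_succ_left_eq,
    ← inv_inv (quarterTurn (cornerRatio f (n + 1) m)), ← this, inv_div,
    div_mul_eq_mul_div, mul_inv_cancel₀ (hf.vEdge_ne_zero (n + 1) m), one_div]

lemma exists_inv_hEdge_eq_ofReal_mul (hf : IsDiscreteConformal f)
    (hkite : ∀ n m, IsKiteRatio (n + m) (cornerRatio f n m)) {n m : ℕ} (hodd : Odd (n + 1 + m)) :
    ∃ r : ℝ, (hEdge f n m)⁻¹ = r * (hEdge f (n + 1) m)⁻¹ := by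
  have hx := eq_I_mul_im ((hkite n m).quarterTurn.2 (add_right_comm n 1 m ▸ hodd))
  have hy := eq_I_mul_im ((hkite (n + 1) m).2 hodd)
  refine ⟨((quarterTurn (cornerRatio f n m)).im * (cornerRatio f (n + 1) m).im)⁻¹, ?_⟩
  have hmul : hEdge f n m =
      -(quarterTurn (cornerRatio f n m) * cornerRatio f (n + 1) m) * hEdge f (n + 1) m := by
    rw [← hf.neg_hEdge_div_vEdge_succ, cornerRatio]
    have h₁ := hf.hEdge_ne_zero (n + 1) m
    have h₂ := hf.vEdge_ne_zero (n + 1) m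
    field_simp
  rw [hx, hy, mul_mul_mul_comm, I_mul_I, neg_one_mul, neg_neg] at hmul
  rw [hmul, mul_inv]
  push_cast
  rfl

end IsDiscreteConformal

namespace IsDiscretePower

variable {γ : ℝ} {f : ℕ → ℕ → ℂ}

lemma constraint_zero_succ (hf : IsDiscretePower γ f) (m : ℕ) :
    γ * f 0 (m + 1) = 2 * (m + 1) * ((vEdge f 0 m)⁻¹ + (vEdge f 0 (m + 1))⁻¹)⁻¹ := by
  rw [hf.constraint, if_pos rfl, if_neg m.succ_ne_zero,
    inv_add_inv (hf.vEdge_ne_zero 0 m) (hf.vEdge_ne_zero 0 (m + 1))]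
  simp [vEdge, mul_div_assoc, mul_comm]

lemma constraint_succ_succ (hf : IsDiscretePower γ f) (n m : ℕ) :
    γ * f (n + 1) (m + 1) =
      2 * (n + 1) * ((hEdge f n (m + 1))⁻¹ + (hEdge f (n + 1) (m + 1))⁻¹)⁻¹ +
      2 * (m + 1) * ((vEdge f (n + 1) m)⁻¹ + (vEdge f (n + 1) (m + 1))⁻¹)⁻¹ := by
  rw [hf.constraint, if_neg n.succ_ne_zero, if_neg m.succ_ne_zero,
    inv_add_inv (hf.hEdge_ne_zero n (m + 1)) (hf.hEdge_ne_zero (n + 1) (m + 1)),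
    inv_add_inv (hf.vEdge_ne_zero (n + 1) m) (hf.vEdge_ne_zero (n + 1) (m + 1))]
  simp [hEdge, vEdge, mul_div_assoc, mul_comm]

lemma exists_constraint_eq (hf : IsDiscretePower γ f)
    (hkite : ∀ n m, IsKiteRatio (n + m) (cornerRatio f n m)) {n m : ℕ} (heven : Even (n + m)) :
    ∃ R : ℝ, γ * f n (m + 1) = R * hEdge f n (m + 1) +
      2 * (m + 1) * ((vEdge f n m)⁻¹ + (vEdge f n (m + 1))⁻¹)⁻¹ := by
  rcases n with _ | n
  · exact ⟨0, by simp [hf.constraint_zero_succ m]⟩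
  obtain ⟨r, hr⟩ := hf.exists_inv_hEdge_eq_ofReal_mul hkite (n := n) (m := m + 1)
    (heven.add_one)
  refine ⟨2 * (n + 1) * (r + 1)⁻¹, ?_⟩
  rw [hf.constraint_succ_succ, hr, ← add_one_mul, mul_inv, inv_inv]
  push_cast
  ring

lemma one_add_quarterTurn_div_ne_zero (hf : IsDiscretePower γ f) (n m : ℕ) :
    1 + quarterTurn (cornerRatio f (n + 1) m) / quarterTurn (quarterTurn (cornerRatio f n m)) ≠
      0 := by
  intro h0
  have hsum := inv_add_inv (hf.hEdge_ne_zero n (m + 1)) (hf.hEdge_ne_zero (n + 1) (m + 1))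
  rw [hf.inv_hEdge_succ_succ_eq, ← one_add_mul, h0, zero_mul, add_comm] at hsum
  exact div_ne_zero (hf.hEdge_add_hEdge_ne_zero n (m + 1))
    (mul_ne_zero (hf.hEdge_ne_zero n (m + 1)) (hf.hEdge_ne_zero (n + 1) (m + 1))) hsum.symm

/-- Difference of the constraints at `(n + 1, m + 1)` and `(n, m + 1)`, divided by the edge between
these two vertices. -/
lemma exists_constraint_sub_eq (hf : IsDiscretePower γ f)
    (hkite : ∀ n m, IsKiteRatio (n + m) (cornerRatio f n m)) {n m : ℕ} (heven : Even (n + m)) :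
    ∃ R : ℝ, R = 2 * (n + 1) * (1 + quarterTurn (cornerRatio f (n + 1) m) /
        quarterTurn (quarterTurn (cornerRatio f n m)))⁻¹ +
      2 * (m + 1) * ((quarterTurn (quarterTurn (cornerRatio f n m)))⁻¹ -
        quarterTurn (cornerRatio f n (m + 1)))⁻¹ -
      2 * (m + 1) * ((quarterTurn (cornerRatio f n m))⁻¹ + (cornerRatio f n (m + 1))⁻¹)⁻¹ := by
  obtain ⟨R, hR⟩ := hf.exists_constraint_eq hkite heven
  have hC := hf.constraint_succ_succ n m
  have hdiff : f (n + 1) (m + 1) = f n (m + 1) + hEdge f n (m + 1) := (add_sub_cancel _ _).symm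
  refine ⟨γ + R, mul_right_cancel₀ (hf.hEdge_ne_zero n (m + 1)) ?_⟩
  rw [hf.inv_hEdge_succ_succ_eq, hf.inv_vEdge_succ_left_eq, hf.inv_vEdge_succ_succ_eq,
    ← one_add_mul, ← add_mul, mul_inv, mul_inv, inv_inv, hdiff] at hC
  rw [hf.inv_vEdge_eq, hf.inv_vEdge_succ_right_eq, ← add_mul, mul_inv, inv_inv] at hR
  push_cast
  linear_combination hC - hR

lemma angle_balance (hf : IsDiscretePower γ f)
    (hkite : ∀ n m, IsKiteRatio (n + m) (cornerRatio f n m)) {n m : ℕ} (heven : Even (n + m))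
    {r s t : ℝ} (hr : cornerRatio f (n + 1) m = I * r) (hs : cornerRatio f n (m + 1) = I * s)
    (ht : quarterTurn (cornerRatio f n m) = I * t) (hs₀ : 0 < s) (ht₀ : 0 < t) :
    (n + 1) * (r - t) * (s + t) = (m + 1) * (1 - s * t) * (1 + r * t) := by
  obtain ⟨R, hR⟩ := hf.exists_constraint_sub_eq hkite heven
  have hne := hf.one_add_quarterTurn_div_ne_zero n m
  rw [ht, hr] at hne hR
  rw [hs] at hR
  obtain ⟨hrt, him⟩ := one_add_quarterTurn_div_inv_im hne
  have h := congrArg im hR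
  have hcast (k : ℕ) : (2 * (k + 1) : ℂ) = (2 * (k + 1) : ℝ) := by push_cast; rfl
  simp only [hcast, ofReal_im, sub_im, add_im, im_ofReal_mul, him, inv_quarterTurn_sub_inv_im,
    inv_add_inv_inv_im hs₀.ne' ht₀.ne'] at h
  have hst : s + t ≠ 0 := (add_pos hs₀ ht₀).ne'
  rw [mul_comm r t] at h hrt ⊢
  field_simp at h
  linear_combination h

lemma cornerRatio_im_pos_of_even (hf : IsDiscretePower γ f)
    (hkite : ∀ n m, IsKiteRatio (n + m) (cornerRatio f n m)) {n m : ℕ} (heven : Even (n + m))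
    (hmn : m ≤ n) (h₀ : 0 < (cornerRatio f n m).im) (h₁ : 0 < (cornerRatio f n (m + 1)).im) :
    0 < (cornerRatio f (n + 1) m).im := by
  have ht := quarterTurn_im_pos.2 h₀
  refine pos_of_angle_balance (n := n + 1) (m := m + 1) (by positivity) (by gcongr) h₁ ht ?_
  refine hf.angle_balance hkite heven (eq_I_mul_im ((hkite (n + 1) m).2 ?_))
    (eq_I_mul_im ((hkite n (m + 1)).2 heven.add_one))
    (eq_I_mul_im ((hkite n m).quarterTurn.2 heven.add_one)) h₁ ht
  exact add_right_comm n m 1 ▸ heven.add_one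

lemma cornerRatio_self_im_pos (hf : IsDiscretePower γ f) (hsymm : reflect f = f) {n : ℕ}
    (h : 0 < (hEdge f n n).re ∧ (hEdge f n n).im < 0) : 0 < (cornerRatio f n n).im := by
  rw [cornerRatio, vEdge_self_of_reflect_eq hsymm, div_im, ← sub_div]
  refine div_pos ?_ (normSq_pos.2 (hf.hEdge_ne_zero n n))
  simp only [conj_re, conj_im]
  nlinarith [mul_neg_of_pos_of_neg h.1 h.2]

lemma cornerRatio_self_succ_im_pos (hf : IsDiscretePower γ f) (hsymm : reflect f = f)
    (h : ∀ n, 0 < (hEdge f n n).re ∧ (hEdge f n n).im < 0) (n : ℕ) :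
    0 < (cornerRatio f n (n + 1)).im := by
  obtain ⟨hre, him⟩ := h n
  obtain ⟨hre', him'⟩ := h (n + 1)
  set u := hEdge f n n
  set u' := hEdge f (n + 1) (n + 1)
  have hedge : hEdge f n (n + 1) = I * (u.im / u.re : ℝ) * conj u := by
    have hmul := hf.hEdge_succ_mul n n
    rw [vEdge_self_of_reflect_eq hsymm, add_conj, sub_conj] at hmul
    have hre_ne : (u.re : ℂ) ≠ 0 := by exact_mod_cast hre.ne'
    push_cast at hmul ⊢
    field_simp
    linear_combination hmul / 2
  rw [← quarterTurn_im_pos, ← hf.neg_hEdge_div_vEdge_succ, vEdge_self_of_reflect_eq hsymm, hedge,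
    neg_div, neg_im, neg_pos]
  have : I * (u.im / u.re : ℝ) * conj u / conj u' =
      (u.im / u.re / normSq u' : ℝ) * (I * (conj u * u')) := by
    have hconj : u' = normSq u' / conj u' := by
      rw [eq_div_iff ((map_ne_zero _).2 (hf.hEdge_ne_zero _ _)), mul_conj]
    have hnormSq : (normSq u' : ℂ) ≠ 0 := by
      exact_mod_cast (normSq_pos.2 (hf.hEdge_ne_zero _ _)).ne'
    push_cast
    nth_rw 3 [hconj]
    field_simp
  rw [this, im_ofReal_mul]
  refine mul_neg_of_neg_of_pos (div_neg_of_neg_of_pos (div_neg_of_neg_of_pos him hre)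
    (normSq_pos.2 (hf.hEdge_ne_zero _ _))) ?_
  simp only [I_mul_im, mul_re, conj_re, conj_im]
  nlinarith [mul_pos hre hre', mul_pos_of_neg_of_neg him him']

lemma cornerRatio_add_im_pos (hf : IsDiscretePower γ f)
    (hkite : ∀ n m, IsKiteRatio (n + m) (cornerRatio f n m))
    (h₀ : ∀ n, 0 < (cornerRatio f n n).im) (h₁ : ∀ n, 0 < (cornerRatio f n (n + 1)).im)
    (d n : ℕ) : 0 < (cornerRatio f (n + d) n).im ∧ 0 < (cornerRatio f (n + d) (n + 1)).im := by
  induction d generalizing n with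
  | zero => exact ⟨h₀ n, h₁ n⟩
  | succ d ih =>
    have hnext : 0 < (cornerRatio f (n + d + 1) (n + 1)).im := add_right_comm n 1 d ▸ (ih (n + 1)).1
    refine ⟨?_, hnext⟩
    rcases (n + d + n).even_or_odd with heven | hodd
    · exact hf.cornerRatio_im_pos_of_even hkite heven (n.le_add_right d) (ih n).1 (ih n).2
    · exact hf.cornerRatio_im_pos_of_odd hkite hodd (ih n).1 (ih n).2 hnext

theorem cornerRatio_im_pos (hf : IsDiscretePower γ f) (hsymm : reflect f = f)
    (h : ∀ n, 0 < (hEdge f n n).re ∧ (hEdge f n n).im < 0) (n m : ℕ) :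
    0 < (cornerRatio f n m).im := by
  have hbelow (m d : ℕ) : 0 < (cornerRatio f (m + d) m).im :=
    (hf.cornerRatio_add_im_pos (hf.isKiteRatio_cornerRatio hsymm)
      (fun n => hf.cornerRatio_self_im_pos hsymm (h n))
      (hf.cornerRatio_self_succ_im_pos hsymm h) d m).1
  rcases le_total m n with hmn | hnm
  · simpa [hmn] using hbelow m (n - m)
  · rw [← hsymm, cornerRatio_reflect_im_pos]
    simpa [hnm] using hbelow n (m - n)

end IsDiscretePower

lemma I_cpow_mul_exp (γ : ℝ) :
    I ^ ((-γ / 2 : ℝ) : ℂ) * exp (I * (γ * Real.pi) / 2) = conj (I ^ ((-γ / 2 : ℝ) : ℂ)) := by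
  rw [cpow_def_of_ne_zero I_ne_zero, log_I, ← exp_add, ← exp_conj]
  congr 1
  simp only [ofReal_div, ofReal_neg, ofReal_ofNat, map_mul, map_div₀, map_neg, conj_ofReal,
    conj_ofNat, conj_I]
  ring

/-- The discrete `Z^γ` (`0 < γ < 2`) is an immersion. -/
theorem discrete_Z_gamma_is_immersion (γ : ℝ) (hγ0 : 0 < γ) (hγ2 : γ < 2)
    (f : ℕ → ℕ → ℂ)
    (hq : CrossRatioEq f) (hqd : QDenomNonzero f)
    (hc : ConstraintC (γ : ℂ) f) (hcd : CDenomNonzero f)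
    (h00 : f 0 0 = 0) (h10 : f 1 0 = 1)
    (h01 : f 0 1 = Complex.exp (Complex.I * (↑γ * ↑Real.pi) / 2)) :
    IsImmersion f := by
  have hc₀ : I ^ ((-γ / 2 : ℝ) : ℂ) ≠ 0 := (cpow_ne_zero_iff).2 (Or.inl I_ne_zero)
  have hf : IsDiscretePower γ f := ⟨⟨hq, hqd⟩, hc, hcd, h00⟩
  have hg := hf.const_mul hc₀
  have hsymm := hg.reflect_eq_self (by simp only [h10, h01, mul_one, I_cpow_mul_exp])
  have hdiag := hg.hEdge_self_mem_fourth_quadrant hsymm hγ0.le hγ2.le (by rw [h10, mul_one])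
  refine hf.isImmersion fun n m => ?_
  rw [← cornerRatio_const_mul hc₀]
  exact hg.cornerRatio_im_pos hsymm hdiag n m

end
end

section
/- Let β, γ, δ, φ, ψ ∈ ℂ and let f : ℤ × ℤ → ℂ satisfy the cross-ratio equation (q) at every (n,m) (all denominators occurring being nonzero). If the generalized constraint (gc) holds at the three vertices (n,m), (n+1,m), (n,m+1) of an elementary quadrilateral, then (gc) also holds at the fourth vertex (n+1,m+1). Consequently the constraint (gc) is compatible with (q): a solution of (q) on ℤ≥0 × ℤ≥0 satisfying (gc) on the two coordinate axes satisfies (gc) everywhere. -/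
open Complex

noncomputable section

/-- The cross-ratio equation (q) at `(n,m)` for `f : ℤ × ℤ → ℂ`. -/
def CrossRatioEqZ (f : ℤ → ℤ → ℂ) : Prop :=
  ∀ n m : ℤ,
    (f n m - f (n+1) m) * (f (n+1) (m+1) - f n (m+1)) =
      -((f (n+1) m - f (n+1) (m+1)) * (f n (m+1) - f n m))

/-- Nonvanishing of the denominators occurring in (q). -/
def QDenomNonzeroZ (f : ℤ → ℤ → ℂ) : Prop :=
  ∀ n m : ℤ, f (n+1) m - f (n+1) (m+1) ≠ 0 ∧ f n (m+1) - f n m ≠ 0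

/-- Nonvanishing of the denominators occurring in (gc). -/
def GcDenomNonzero (f : ℤ → ℤ → ℂ) : Prop :=
  ∀ n m : ℤ, f (n+1) m - f (n-1) m ≠ 0 ∧ f n (m+1) - f n (m-1) ≠ 0

/-- The generalized constraint (gc) with parameters `β γ δ φ ψ` at `(n,m)`. -/
def GcEq (β γ δ φ ψ : ℂ) (f : ℤ → ℤ → ℂ) (n m : ℤ) : Prop :=
  β * f n m ^ 2 + γ * f n m + δ =
    2 * ((n : ℂ) - φ) * ((f (n+1) m - f n m) * (f n m - f (n-1) m)) /
        (f (n+1) m - f (n-1) m) +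
    2 * ((m : ℂ) - ψ) * ((f n (m+1) - f n m) * (f n m - f n (m-1))) /
        (f n (m+1) - f n (m-1))

/-!
Equation (q) says that the diagonals of every elementary quadrilateral `a, b, c, d` separate each
other harmonically. Weight the four vertices by the coefficients of the third divided difference
at the nodes `a, b, c, d`. Two harmonic quadrilaterals sharing an edge have transverse means at the
ends of that edge whose weighted sum is `±1 / ((a - d) * (b - c))`. In the weighted sum of (gc), the
coefficients `n - φ` and `m - ψ` therefore enter only through their increments across the
quadrilateral, and these cancel. The left-hand side is quadratic in `f`, so its third divided
difference vanishes. Hence the weighted sum of the four residuals of (gc) is identically zero.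
-/

section Field

variable {K : Type*} [Field K]

/-- Four points at the vertices of an elementary quadrilateral (`a` bottom left, `b` bottom right,
`c` top left, `d` top right) with cross-ratio `-1`, in the denominator-free form of (q) together
with the nonvanishing of the two denominators. -/
structure HarmonicQuad (a b c d : K) : Prop where
  cross_ratio : (a - b) * (d - c) = -((b - d) * (c - a))
  right_ne : b ≠ d
  left_ne : a ≠ c

namespace HarmonicQuad

variable {a b c d : K}

lemma flip_horizontal (h : HarmonicQuad a b c d) : HarmonicQuad b a d c :=
  ⟨by linear_combination h.cross_ratio, h.left_ne, h.right_ne⟩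

lemma flip_vertical (h : HarmonicQuad a b c d) : HarmonicQuad c d a b :=
  ⟨by linear_combination h.cross_ratio, h.right_ne.symm, h.left_ne.symm⟩

lemma bottom_ne (h : HarmonicQuad a b c d) : a ≠ b := by
  rintro rfl
  have : (a - d) * (c - a) = 0 := by linear_combination h.cross_ratio
  exact mul_ne_zero (sub_ne_zero.2 h.right_ne) (sub_ne_zero.2 h.left_ne.symm) this

lemma top_ne (h : HarmonicQuad a b c d) : c ≠ d := h.flip_vertical.bottom_ne

lemma transpose (h : HarmonicQuad a b c d) : HarmonicQuad a c b d :=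
  ⟨by linear_combination h.cross_ratio, h.top_ne, h.bottom_ne⟩

lemma diag_ne [NeZero (2 : K)] (h : HarmonicQuad a b c d) : a ≠ d := by
  rintro rfl
  have : 2 * ((a - b) * (a - c)) = 0 := by linear_combination h.cross_ratio
  exact mul_ne_zero two_ne_zero
    (mul_ne_zero (sub_ne_zero.2 h.bottom_ne) (sub_ne_zero.2 h.left_ne)) this

lemma antidiag_ne [NeZero (2 : K)] (h : HarmonicQuad a b c d) : b ≠ c := h.flip_horizontal.diag_ne

end HarmonicQuad

/-- The weight of the node `a` in the third divided difference at the nodes `a`, `b`, `c`, `d`. -/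
def dividedDiffWeight (a b c d : K) : K := 1 / ((a - b) * (a - c) * (a - d))

lemma dividedDiffWeight_ne_zero {a b c d : K} (hab : a ≠ b) (hac : a ≠ c) (had : a ≠ d) :
    dividedDiffWeight a b c d ≠ 0 :=
  one_div_ne_zero
    (mul_ne_zero (mul_ne_zero (sub_ne_zero.2 hab) (sub_ne_zero.2 hac)) (sub_ne_zero.2 had))

lemma dividedDiff_quadratic_eq_zero (β γ δ : K) {a b c d : K} (hab : a ≠ b) (hac : a ≠ c)
    (had : a ≠ d) (hbc : b ≠ c) (hbd : b ≠ d) (hcd : c ≠ d) :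
    dividedDiffWeight a b c d * (β * a ^ 2 + γ * a + δ) +
      dividedDiffWeight b a c d * (β * b ^ 2 + γ * b + δ) +
      dividedDiffWeight c a b d * (β * c ^ 2 + γ * c + δ) +
      dividedDiffWeight d a b c * (β * d ^ 2 + γ * d + δ) = 0 := by
  simp only [dividedDiffWeight, ← neg_sub a b, ← neg_sub a c, ← neg_sub a d, ← neg_sub b c,
    ← neg_sub b d, ← neg_sub c d]
  rw [← sub_ne_zero] at hab hac had hbc hbd hcd
  field_simp
  ring

/-- Half the harmonic mean of the consecutive differences `y - x` and `z - y`; this is the quotient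
on the right-hand side of (gc) for three consecutive values `x`, `y`, `z` along a lattice line. -/
def stepMean (x y z : K) : K := (z - y) * (y - x) / (z - x)

lemma stepMean_rev (x y z : K) : stepMean z y x = -stepMean x y z := by
  rw [stepMean, stepMean, ← div_neg, neg_sub]
  ring

section

variable [NeZero (2 : K)] {a b c d e g : K}

lemma stepMean_eq_of_harmonicQuad (h : HarmonicQuad a b c d) (h' : HarmonicQuad b e d g)
    (hcg : c ≠ g) : stepMean a b e = (g - b) * (c - b) / (2 * (c - g)) := by
  -- Difference of `2 / (c - b) = 1 / (a - b) + 1 / (d - b)` and its analogue for `e` and `g`.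
  have span_relation : (c - b) * (g - b) * (a - e) = 2 * (a - b) * (e - b) * (c - g) := by
    apply mul_right_cancel₀ (sub_ne_zero.2 h.right_ne.symm)
    linear_combination (g - b) * (e - b) * h.cross_ratio - (c - b) * (a - b) * h'.cross_ratio
  have hcg' : 2 * (c - g) ≠ 0 := mul_ne_zero two_ne_zero (sub_ne_zero.2 hcg)
  have hea : e - a ≠ 0 := by
    intro hea
    have : (a - b) * (e - b) * (2 * (c - g)) = 0 := by
      linear_combination -span_relation - (c - b) * (g - b) * hea
    exact mul_ne_zero (mul_ne_zero (sub_ne_zero.2 h.bottom_ne) (sub_ne_zero.2 h'.bottom_ne.symm))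
      hcg' this
  rw [stepMean, div_eq_div_iff hea hcg']
  linear_combination span_relation

lemma diagonals_mul_transverse_stepMean (h : HarmonicQuad a b c d) (h' : HarmonicQuad b e d g)
    (hcg : c ≠ g) :
    (a - d) * (b - c) * (dividedDiffWeight b a c d * stepMean a b e +
      dividedDiffWeight d a b c * stepMean c d g) = 1 := by
  rw [stepMean_eq_of_harmonicQuad h h' hcg]
  have hab := sub_ne_zero.2 h.bottom_ne
  have had := sub_ne_zero.2 h.diag_ne
  have hbc := sub_ne_zero.2 h.antidiag_ne
  have hbd := sub_ne_zero.2 h.right_ne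
  have hcd := sub_ne_zero.2 h.top_ne
  have hcg := sub_ne_zero.2 hcg
  have h2 : (2 : K) ≠ 0 := two_ne_zero
  simp only [dividedDiffWeight, stepMean, ← neg_sub a b, ← neg_sub a d, ← neg_sub b c,
    ← neg_sub b d, ← neg_sub c d, ← neg_sub c g]
  field_simp
  linear_combination -(g - b) * h.cross_ratio

end

/-- The left-hand side minus the right-hand side of (gc) at `(n, m)`, over an arbitrary field. -/
def gcResidual (β γ δ φ ψ : K) (f : ℤ → ℤ → K) (n m : ℤ) : K :=
  β * f n m ^ 2 + γ * f n m + δ -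
    (2 * (n - φ) * stepMean (f (n - 1) m) (f n m) (f (n + 1) m) +
      2 * (m - ψ) * stepMean (f n (m - 1)) (f n m) (f n (m + 1)))

section Lattice

variable [NeZero (2 : K)] {f : ℤ → ℤ → K}

lemma dividedDiff_gcResidual_eq_zero (β γ δ φ ψ : K)
    (hq : ∀ n m, HarmonicQuad (f n m) (f (n + 1) m) (f n (m + 1)) (f (n + 1) (m + 1)))
    (hne : ∀ n m, f (n - 1) m ≠ f (n + 1) m ∧ f n (m - 1) ≠ f n (m + 1)) (n m : ℤ) :
    let a := f n m
    let b := f (n + 1) m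
    let c := f n (m + 1)
    let d := f (n + 1) (m + 1)
    dividedDiffWeight a b c d * gcResidual β γ δ φ ψ f n m +
      dividedDiffWeight b a c d * gcResidual β γ δ φ ψ f (n + 1) m +
      dividedDiffWeight c a b d * gcResidual β γ δ φ ψ f n (m + 1) +
      dividedDiffWeight d a b c * gcResidual β γ δ φ ψ f (n + 1) (m + 1) = 0 := by
  intro a b c d
  have h : HarmonicQuad a b c d := hq n m
  have hW : HarmonicQuad (f (n - 1) m) a (f (n - 1) (m + 1)) c := by simpa using hq (n - 1) m
  have hS : HarmonicQuad (f n (m - 1)) (f (n + 1) (m - 1)) a b := by simpa using hq n (m - 1)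
  have hneE := (hne (n + 1) (m + 1)).1
  have hneN := (hne (n + 1) (m + 1)).2
  rw [add_sub_cancel_right] at hneE hneN
  have east := diagonals_mul_transverse_stepMean h (hq (n + 1) m) hneE
  have north := diagonals_mul_transverse_stepMean h.transpose (hq n (m + 1)).transpose hneN
  have west := diagonals_mul_transverse_stepMean h.flip_horizontal hW.flip_horizontal
    (hne n (m + 1)).1.symm
  have south := diagonals_mul_transverse_stepMean h.flip_vertical.transpose
    hS.flip_vertical.transpose (hne (n + 1) m).2.symm
  have quadratic := dividedDiff_quadratic_eq_zero β γ δ h.bottom_ne h.left_ne h.diag_ne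
    h.antidiag_ne h.right_ne h.top_ne
  rw [stepMean_rev _ a, stepMean_rev _ c] at west
  rw [stepMean_rev _ a, stepMean_rev _ b] at south
  apply mul_left_cancel₀ (mul_ne_zero (sub_ne_zero.2 h.diag_ne) (sub_ne_zero.2 h.antidiag_ne))
  simp only [gcResidual, add_sub_cancel_right, Int.cast_add, Int.cast_one]
  simp only [dividedDiffWeight] at east north west south quadratic ⊢
  linear_combination (a - d) * (b - c) * quadratic - 2 * (n + 1 - φ) * east
    + 2 * (m + 1 - ψ) * north + 2 * (n - φ) * west - 2 * (m - ψ) * south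

lemma gcResidual_propagates {β γ δ φ ψ : K}
    (hq : ∀ n m, HarmonicQuad (f n m) (f (n + 1) m) (f n (m + 1)) (f (n + 1) (m + 1)))
    (hne : ∀ n m, f (n - 1) m ≠ f (n + 1) m ∧ f n (m - 1) ≠ f n (m + 1)) {n m : ℤ}
    (h₀₀ : gcResidual β γ δ φ ψ f n m = 0) (h₁₀ : gcResidual β γ δ φ ψ f (n + 1) m = 0)
    (h₀₁ : gcResidual β γ δ φ ψ f n (m + 1) = 0) :
    gcResidual β γ δ φ ψ f (n + 1) (m + 1) = 0 := by
  have hsum := dividedDiff_gcResidual_eq_zero β γ δ φ ψ hq hne n m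
  simp only [h₀₀, h₁₀, h₀₁, mul_zero, zero_add] at hsum
  have h := hq n m
  exact (mul_eq_zero.1 hsum).resolve_left
    (dividedDiffWeight_ne_zero h.diag_ne.symm h.right_ne.symm h.top_ne.symm)

end Lattice

lemma int_quadrant_induction {P : ℤ → ℤ → Prop} (horizontal : ∀ n, 0 ≤ n → P n 0)
    (vertical : ∀ m, 0 ≤ m → P 0 m)
    (step : ∀ n m, P n m → P (n + 1) m → P n (m + 1) → P (n + 1) (m + 1)) (n m : ℤ)
    (hn : 0 ≤ n) (hm : 0 ≤ m) : P n m := by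
  induction n, hn using Int.leInduction generalizing m with
  | base => exact vertical m hm
  | succ n hn column =>
    induction m, hm using Int.leInduction with
    | base => exact horizontal (n + 1) (by lia)
    | succ m hm below => exact step n m (column m hm) below (column (m + 1) (by lia))

theorem gc_compatible_with_q_general [NeZero (2 : K)] (β γ δ φ ψ : K) (f : ℤ → ℤ → K)
    (hq : ∀ n m, HarmonicQuad (f n m) (f (n + 1) m) (f n (m + 1)) (f (n + 1) (m + 1)))
    (hne : ∀ n m, f (n - 1) m ≠ f (n + 1) m ∧ f n (m - 1) ≠ f n (m + 1)) :
    (∀ n m : ℤ, gcResidual β γ δ φ ψ f n m = 0 → gcResidual β γ δ φ ψ f (n + 1) m = 0 →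
      gcResidual β γ δ φ ψ f n (m + 1) = 0 → gcResidual β γ δ φ ψ f (n + 1) (m + 1) = 0) ∧
    ((∀ n : ℤ, 0 ≤ n → gcResidual β γ δ φ ψ f n 0 = 0) →
      (∀ m : ℤ, 0 ≤ m → gcResidual β γ δ φ ψ f 0 m = 0) →
      ∀ n m : ℤ, 0 ≤ n → 0 ≤ m → gcResidual β γ δ φ ψ f n m = 0) :=
  have step := fun _ _ ↦ gcResidual_propagates hq hne
  ⟨step, fun horizontal vertical ↦ int_quadrant_induction horizontal vertical step⟩

end Field

lemma gcEq_iff_gcResidual_eq_zero (β γ δ φ ψ : ℂ) (f : ℤ → ℤ → ℂ) (n m : ℤ) :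
    GcEq β γ δ φ ψ f n m ↔ gcResidual β γ δ φ ψ f n m = 0 := by
  simp only [GcEq, gcResidual, stepMean, sub_eq_zero, mul_div_assoc]

lemma CrossRatioEqZ.harmonicQuad {f : ℤ → ℤ → ℂ} (hq : CrossRatioEqZ f) (hqd : QDenomNonzeroZ f)
    (n m : ℤ) : HarmonicQuad (f n m) (f (n + 1) m) (f n (m + 1)) (f (n + 1) (m + 1)) :=
  ⟨hq n m, sub_ne_zero.1 (hqd n m).1, (sub_ne_zero.1 (hqd n m).2).symm⟩

lemma GcDenomNonzero.ne {f : ℤ → ℤ → ℂ} (hgcd : GcDenomNonzero f) (n m : ℤ) :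
    f (n - 1) m ≠ f (n + 1) m ∧ f n (m - 1) ≠ f n (m + 1) :=
  ⟨(sub_ne_zero.1 (hgcd n m).1).symm, (sub_ne_zero.1 (hgcd n m).2).symm⟩

/-- The constraint (gc) propagates from three vertices of an elementary quadrilateral to
the fourth one; consequently (gc) is compatible with (q): a solution of (q) satisfying
(gc) on both coordinate axes satisfies (gc) on the whole quadrant. -/
theorem gc_compatible_with_q (β γ δ φ ψ : ℂ) (f : ℤ → ℤ → ℂ)
    (hq : CrossRatioEqZ f) (hqd : QDenomNonzeroZ f) (hgcd : GcDenomNonzero f) :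
    (∀ n m : ℤ, GcEq β γ δ φ ψ f n m → GcEq β γ δ φ ψ f (n+1) m →
      GcEq β γ δ φ ψ f n (m+1) → GcEq β γ δ φ ψ f (n+1) (m+1)) ∧
    ((∀ n : ℤ, 0 ≤ n → GcEq β γ δ φ ψ f n 0) →
     (∀ m : ℤ, 0 ≤ m → GcEq β γ δ φ ψ f 0 m) →
     ∀ n m : ℤ, 0 ≤ n → 0 ≤ m → GcEq β γ δ φ ψ f n m) := by
  simp only [gcEq_iff_gcResidual_eq_zero]
  exact gc_compatible_with_q_general β γ δ φ ψ f (hq.harmonicQuad hqd) hgcd.ne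

end
end

section
/- Let γ ∈ ℂ and α ∈ ℝ, and let f : ℤ≥0 × ℤ≥0 → ℂ satisfy the cross-ratio equation (q) and the constraint (c) with parameter γ at every (n,m) (all denominators occurring being nonzero), with initial data f_{0,0} = 0, f_{1,0} = 1, f_{0,1} = e^{iα}. Then f has the equidistant property on the axes: f_{2n,0} − f_{2n−1,0} = f_{2n+1,0} − f_{2n,0} and f_{0,2m} − f_{0,2m−1} = f_{0,2m+1} − f_{0,2m} for all n ≥ 1 and m ≥ 1. -/
/-!
On an axis, with steps `d n = a (n + 1) - a n`, the constraint reads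
`γ * a n * (d n + d (n - 1)) = 2 * n * d n * d (n - 1)`, and by the cross-ratio equation no step
vanishes. If `γ * a n = n * d n`, then the constraint at `n + 1` gives
`γ * a (n + 2) = (n + 2) * d (n + 1)`, and inserting this into the constraint at `n + 2` yields
`d (n + 1) = d (n + 2)`, hence `γ * a (n + 2) = (n + 2) * d (n + 2)`. The case `n = 0` is the
constraint at the origin, so the steps agree on both sides of every even point.
-/

open Complex

noncomputable section

/-- The constraint (c) restricted to a coordinate axis, `a n` being the value at the `n`-th point.
The denominators are cleared; `zero` is (c) at the origin, where both terms are absent. -/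
structure AxisConstraint {R : Type*} [CommRing R] (γ : R) (a : ℕ → R) : Prop where
  zero : γ * a 0 = 0
  succ (n : ℕ) : γ * a (n + 1) * (a (n + 2) - a n) =
    2 * (n + 1) * ((a (n + 2) - a (n + 1)) * (a (n + 1) - a n))

namespace AxisConstraint

variable {R : Type*} [CommRing R] [NoZeroDivisors R] {γ : R} {a : ℕ → R}

theorem mul_add_two_eq_backward_step (h : AxisConstraint γ a) {n : ℕ} (hne : a (n + 1) ≠ a n)
    (hn : γ * a n = n * (a (n + 1) - a n)) :
    γ * a (n + 2) = (n + 2) * (a (n + 2) - a (n + 1)) := by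
  apply mul_left_cancel₀ (sub_ne_zero.2 hne)
  linear_combination h.succ n - (a (n + 2) - a (n + 1)) * hn

theorem backward_step_eq_forward_step [CharZero R] (h : AxisConstraint γ a) {n : ℕ}
    (hne : a (n + 1) ≠ a n) (hn : γ * a (n + 1) = (n + 1) * (a (n + 1) - a n)) :
    a (n + 1) - a n = a (n + 2) - a (n + 1) := by
  apply mul_left_cancel₀ (mul_ne_zero n.cast_add_one_ne_zero (sub_ne_zero.2 hne))
  linear_combination h.succ n - (a (n + 2) - a n) * hn

theorem backward_step_eq_forward_step_add_two [CharZero R] (h : AxisConstraint γ a)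
    (hne : ∀ n, a (n + 1) ≠ a n) {n : ℕ} (hn : γ * a n = n * (a (n + 1) - a n)) :
    a (n + 2) - a (n + 1) = a (n + 3) - a (n + 2) := by
  apply h.backward_step_eq_forward_step (hne (n + 1))
  push_cast
  linear_combination h.mul_add_two_eq_backward_step (hne n) hn

theorem mul_even_eq_forward_step [CharZero R] (h : AxisConstraint γ a)
    (hne : ∀ n, a (n + 1) ≠ a n) (k : ℕ) :
    γ * a (2 * k) = (2 * k : ℕ) * (a (2 * k + 1) - a (2 * k)) := by
  induction k with
  | zero => simpa using h.zero
  | succ k ih =>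
    have backward := h.mul_add_two_eq_backward_step (hne (2 * k)) ih
    rw [h.backward_step_eq_forward_step_add_two hne ih] at backward
    exact_mod_cast backward

theorem equidistant [CharZero R] (h : AxisConstraint γ a) (hne : ∀ n, a (n + 1) ≠ a n)
    (n : ℕ) (hn : 1 ≤ n) :
    a (2 * n) - a (2 * n - 1) = a (2 * n + 1) - a (2 * n) := by
  obtain ⟨k, rfl⟩ := Nat.exists_eq_add_of_le' hn
  exact h.backward_step_eq_forward_step_add_two hne (h.mul_even_eq_forward_step hne k)

end AxisConstraint

section Lattice

variable {γ : ℂ} {f : ℕ → ℕ → ℂ}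

theorem CrossRatioEq.succ_left_ne (hq : CrossRatioEq f) (hqd : QDenomNonzero f) (n m : ℕ) :
    f (n + 1) m ≠ f n m := by
  have hprod := neg_ne_zero.2 (mul_ne_zero (hqd n m).1 (hqd n m).2)
  rw [← hq n m] at hprod
  exact (sub_ne_zero.1 (left_ne_zero_of_mul hprod)).symm

theorem ConstraintC.swap (hc : ConstraintC γ f) : ConstraintC γ (Function.swap f) :=
  fun n m => (hc m n).trans (add_comm _ _)

theorem CDenomNonzero.swap (hcd : CDenomNonzero f) : CDenomNonzero (Function.swap f) :=
  fun n m => (hcd m n).symm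

theorem ConstraintC.axisConstraint (hc : ConstraintC γ f) (hcd : CDenomNonzero f) :
    AxisConstraint γ (f · 0) where
  zero := by simpa using hc 0 0
  succ n := by
    have hden : f (n + 2) 0 - f n 0 ≠ 0 := (hcd (n + 1) 0).1 n.succ_ne_zero
    have hdiv : γ * f (n + 1) 0 = 2 * (n + 1) *
        ((f (n + 2) 0 - f (n + 1) 0) * (f (n + 1) 0 - f n 0)) / (f (n + 2) 0 - f n 0) := by
      simpa using hc (n + 1) 0
    exact (eq_div_iff hden).1 hdiv

theorem equidistant_on_axes_general (hc : ConstraintC γ f) (hcd : CDenomNonzero f)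
    (hright : ∀ n, f (n + 1) 0 ≠ f n 0) (hup : ∀ m, f 0 (m + 1) ≠ f 0 m) :
    (∀ n : ℕ, 1 ≤ n → f (2*n) 0 - f (2*n - 1) 0 = f (2*n + 1) 0 - f (2*n) 0) ∧
    (∀ m : ℕ, 1 ≤ m → f 0 (2*m) - f 0 (2*m - 1) = f 0 (2*m + 1) - f 0 (2*m)) :=
  ⟨(hc.axisConstraint hcd).equidistant hright, (hc.swap.axisConstraint hcd.swap).equidistant hup⟩

end Lattice

/-- The equidistant property on the two coordinate axes. -/
theorem equidistant_on_axes (γ : ℂ) (α : ℝ) (f : ℕ → ℕ → ℂ)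
    (hq : CrossRatioEq f) (hqd : QDenomNonzero f)
    (hc : ConstraintC γ f) (hcd : CDenomNonzero f)
    (h00 : f 0 0 = 0) (h10 : f 1 0 = 1)
    (h01 : f 0 1 = Complex.exp (Complex.I * α)) :
    (∀ n : ℕ, 1 ≤ n → f (2*n) 0 - f (2*n - 1) 0 = f (2*n + 1) 0 - f (2*n) 0) ∧
    (∀ m : ℕ, 1 ≤ m → f 0 (2*m) - f 0 (2*m - 1) = f 0 (2*m + 1) - f 0 (2*m)) :=
  equidistant_on_axes_general hc hcd (fun n => hq.succ_left_ne hqd n 0)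
    (fun m => sub_ne_zero.1 (hqd 0 m).2)

end
end

section
/- Let 0 < γ < 2 and let R : ℤ + iℤ → ℝ be positive at all points of V and at all points −N + i(N−1) and N+1 + iN (N ∈ ℕ) occurring below. Suppose R satisfies equation (square) with parameter γ at every z ∈ V_l, and equation (Ri) at every z = iM, M ∈ ℕ. Then R satisfies: (a) equation (Ri) at every z ∈ V ∖ {N + iN : N ∈ ℕ}; (b) equation (Le) at every z ∈ V ∖ {−N + iN : N ∈ ℕ}; (c) equation (lnR) at every z ∈ V_int. -/
noncomputable section

/-- Equation (square) with parameter `γ` at `z = N + iM` (the lattice `ℤ + iℤ` is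
indexed by pairs `(N, M)`). -/
def SquareEq (γ : ℝ) (R : ℤ → ℤ → ℝ) (N M : ℤ) : Prop :=
  R N M * R (N+1) M * (-2*(M : ℝ) - γ) +
  R (N+1) M * R (N+1) (M+1) * (2*((N : ℝ)+1) - γ) +
  R (N+1) (M+1) * R N (M+1) * (2*((M : ℝ)+1) - γ) +
  R N (M+1) * R N M * (-2*(N : ℝ) - γ) = 0

/-- Equation (Ri) at `z = N + iM`. -/
def RiEq (R : ℤ → ℤ → ℝ) (N M : ℤ) : Prop :=
  ((N + M : ℤ) : ℝ) * (R N M ^ 2 - R (N+1) M * R N (M-1)) * (R N (M+1) + R (N+1) M) +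
  ((M - N : ℤ) : ℝ) * (R N M ^ 2 - R N (M+1) * R (N+1) M) * (R (N+1) M + R N (M-1)) = 0

/-- Equation (Le) at `z = N + iM`. -/
def LeEq (R : ℤ → ℤ → ℝ) (N M : ℤ) : Prop :=
  ((N + M : ℤ) : ℝ) * (R N M ^ 2 - R N (M+1) * R (N-1) M) * (R (N-1) M + R N (M-1)) +
  ((M - N : ℤ) : ℝ) * (R N M ^ 2 - R (N-1) M * R N (M-1)) * (R N (M+1) + R (N-1) M) = 0

/-- Equation (lnR) at `z = N + iM`. -/
def LnREq (R : ℤ → ℤ → ℝ) (N M : ℤ) : Prop :=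
  R N M ^ 2 * (R (N+1) M + R N (M+1) + R (N-1) M + R N (M-1)) =
    (1 / R (N+1) M + 1 / R N (M+1) + 1 / R (N-1) M + 1 / R N (M-1)) *
      (R (N+1) M * R N (M+1) * R (N-1) M * R N (M-1))

/-- Membership `N + iM ∈ V_l = V ∪ {-k + i(k-1) : k ∈ ℕ}`. -/
def memVl (N M : ℤ) : Prop := |N| ≤ M ∨ (N ≤ -1 ∧ M = -N - 1)

/-!
At a vertex of radius `r`, give each neighbour of radius `x` the angle `arctan (x / r)`. In the
cotangents of the sums of two consecutive angles, (Ri), (Le) and (lnR) become linear: (lnR) says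
that the four angles add up to `π`, so that cotangents at opposite corners cancel. Equation
(square) is linear too: it expresses the cotangent at one corner of the square through the one at
an adjacent corner. Eliminating along the edge shared by two neighbouring squares carries (Ri) at
`z` to (Le) at `z + 1`, and a similar relation between the two northern corners at `z` to one
between the two southern corners at `z + i`. The latter, together with (Ri) or (Le), gives (lnR)
and hence both, which lets one climb each column in turn, starting from the imaginary axis.
-/

/-- `r * cot (arctan (x / r) + arctan (y / r))`, the scaled cotangent of the sum of the angles that
neighbours of radii `x` and `y` contribute at a vertex of radius `r`, written without inverse
trigonometric functions. -/
def cotSum (r x y : ℝ) : ℝ := (r ^ 2 - x * y) / (x + y)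

theorem cotSum_comm (r x y : ℝ) : cotSum r x y = cotSum r y x := by
  rw [cotSum, cotSum, mul_comm x, add_comm x]

theorem cotSum_add_eq_zero_iff {r x y z w : ℝ} (hxy : x + y ≠ 0) (hzw : z + w ≠ 0) :
    cotSum r x y + cotSum r z w = 0 ↔
      r ^ 2 * (x + y + z + w) = x * y * z + x * y * w + x * z * w + y * z * w := by
  rw [cotSum, cotSum, div_add_div _ _ hxy hzw, div_eq_zero_iff, or_iff_left (mul_ne_zero hxy hzw)]
  constructor <;> intro h <;> linear_combination h

-- `b c` is an edge of the square and `x x'` the opposite one; the last two terms do not involve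
-- `x`, `x'` or `n`, so they agree for the two squares sharing the edge `b c`.
theorem mul_cotSum_of_square {γ m n b c x x' : ℝ} (hxc : x + c ≠ 0) (hbx : b + x' ≠ 0)
    (h : b * x * (-2 * m - γ) + x * x' * (2 * (n + 1) - γ) + x' * c * (2 * (m + 1) - γ) +
      c * b * (-2 * n - γ) = 0) :
    2 * (n + m + 1) * b * cotSum c b x' =
      2 * (m - n) * c * cotSum b x c + (2 * m + 2 - γ) * c ^ 2 - (2 * m + γ) * b ^ 2 := by
  unfold cotSum
  field_simp
  linear_combination -(b ^ 2 + c ^ 2) * h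

/-- The scaled cotangent at the north-east corner of the vertex `N + iM`. -/
def cotNE (R : ℤ → ℤ → ℝ) (N M : ℤ) : ℝ := cotSum (R N M) (R (N + 1) M) (R N (M + 1))

/-- The scaled cotangent at the north-west corner of the vertex `N + iM`. -/
def cotNW (R : ℤ → ℤ → ℝ) (N M : ℤ) : ℝ := cotSum (R N M) (R (N - 1) M) (R N (M + 1))

/-- The scaled cotangent at the south-west corner of the vertex `N + iM`. -/
def cotSW (R : ℤ → ℤ → ℝ) (N M : ℤ) : ℝ := cotSum (R N M) (R N (M - 1)) (R (N - 1) M)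

/-- The scaled cotangent at the south-east corner of the vertex `N + iM`. -/
def cotSE (R : ℤ → ℤ → ℝ) (N M : ℤ) : ℝ := cotSum (R N M) (R N (M - 1)) (R (N + 1) M)

/-- The analogue of (Ri) and (Le) at `N + iM` that involves all neighbours but the southern one. -/
def UpEq (R : ℤ → ℤ → ℝ) (N M : ℤ) : Prop := (N + M) * cotNW R N M = (M - N) * cotNE R N M

/-- The analogue of (Ri) and (Le) at `N + iM` that involves all neighbours but the northern one. -/
def DownEq (R : ℤ → ℤ → ℝ) (N M : ℤ) : Prop := (N + M) * cotSE R N M = (M - N) * cotSW R N M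

/-- The radius function obtained from `R` by reflecting the lattice in the imaginary axis. -/
def reflection (R : ℤ → ℤ → ℝ) (N M : ℤ) : ℝ := R (-N) M

/-- `R` is a positive solution of (square): positivity is required on `V` and at its horizontal
neighbours, and `-M - 1 ≤ N ≤ M` describes `V_l`. Both regions are symmetric under
`reflection`. -/
structure IsPositiveSolution (γ : ℝ) (R : ℤ → ℤ → ℝ) : Prop where
  pos : ∀ N M : ℤ, 0 ≤ M → -M - 1 ≤ N → N ≤ M + 1 → 0 < R N M
  square : ∀ N M : ℤ, -M - 1 ≤ N → N ≤ M → SquareEq γ R N M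

section Reflection

variable {γ : ℝ} {R : ℤ → ℤ → ℝ} {N M : ℤ}

theorem squareEq_reflection : SquareEq γ (reflection R) N M ↔ SquareEq γ R (-N - 1) M := by
  simp only [SquareEq, reflection, neg_add', sub_add_cancel]
  push_cast
  constructor <;> intro h <;> linear_combination h

theorem leEq_reflection : LeEq (reflection R) N M ↔ RiEq R (-N) M := by
  simp only [LeEq, RiEq, reflection, neg_sub', sub_neg_eq_add]
  push_cast
  constructor <;> intro h <;> linear_combination h

theorem riEq_reflection : RiEq (reflection R) N M ↔ LeEq R (-N) M := by
  simp only [LeEq, RiEq, reflection, neg_add']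
  push_cast
  constructor <;> intro h <;> linear_combination h

theorem lnREq_reflection : LnREq (reflection R) N M ↔ LnREq R (-N) M := by
  simp only [LnREq, reflection, neg_add', neg_sub', sub_neg_eq_add]
  constructor <;> intro h <;> linear_combination h

theorem IsPositiveSolution.reflect (h : IsPositiveSolution γ R) :
    IsPositiveSolution γ (reflection R) where
  pos N M hM hl hr := h.pos (-N) M hM (by omega) (by omega)
  square N M hl hr := squareEq_reflection.2 (h.square _ M (by omega) (by omega))

end Reflection

namespace IsPositiveSolution

variable {γ : ℝ} {R : ℤ → ℤ → ℝ} {N M : ℤ}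

theorem pos_neighbours (h : IsPositiveSolution γ R) (hM : 0 < M) (hl : -M ≤ N) (hr : N ≤ M) :
    0 < R (N + 1) M ∧ 0 < R N (M + 1) ∧ 0 < R (N - 1) M ∧ 0 < R N (M - 1) :=
  ⟨h.pos _ _ (by omega) (by omega) (by omega), h.pos _ _ (by omega) (by omega) (by omega),
    h.pos _ _ (by omega) (by omega) (by omega), h.pos _ _ (by omega) (by omega) (by omega)⟩

theorem riEq_iff (h : IsPositiveSolution γ R) (hM : 0 < M) (hl : -M ≤ N) (hr : N ≤ M) :
    RiEq R N M ↔ (N + M) * cotSE R N M + (M - N) * cotNE R N M = 0 := by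
  obtain ⟨hE, hN, -, hS⟩ := h.pos_neighbours hM hl hr
  unfold RiEq cotSE cotNE cotSum
  push_cast
  field_simp
  constructor <;> intro H <;> linear_combination H

theorem leEq_iff (h : IsPositiveSolution γ R) (hM : 0 < M) (hl : -M ≤ N) (hr : N ≤ M) :
    LeEq R N M ↔ (N + M) * cotNW R N M + (M - N) * cotSW R N M = 0 := by
  obtain ⟨-, hN, hW, hS⟩ := h.pos_neighbours hM hl hr
  unfold LeEq cotNW cotSW cotSum
  push_cast
  field_simp
  constructor <;> intro H <;> linear_combination H

theorem lnREq_iff_esymm (h : IsPositiveSolution γ R) (hM : 0 < M) (hl : -M ≤ N) (hr : N ≤ M) :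
    LnREq R N M ↔ R N M ^ 2 * (R (N + 1) M + R N (M + 1) + R (N - 1) M + R N (M - 1)) =
      R (N + 1) M * R N (M + 1) * R (N - 1) M + R (N + 1) M * R N (M + 1) * R N (M - 1) +
        R (N + 1) M * R (N - 1) M * R N (M - 1) + R N (M + 1) * R (N - 1) M * R N (M - 1) := by
  obtain ⟨hE, hN, hW, hS⟩ := h.pos_neighbours hM hl hr
  unfold LnREq
  field_simp
  constructor <;> intro H <;> linear_combination H

theorem lnREq_iff_cotNE_add_cotSW (h : IsPositiveSolution γ R) (hM : 0 < M) (hl : -M ≤ N)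
    (hr : N ≤ M) : LnREq R N M ↔ cotNE R N M + cotSW R N M = 0 := by
  obtain ⟨hE, hN, hW, hS⟩ := h.pos_neighbours hM hl hr
  rw [h.lnREq_iff_esymm hM hl hr, cotNE, cotSW,
    cotSum_add_eq_zero_iff (by positivity) (by positivity)]
  constructor <;> intro H <;> linear_combination H

theorem lnREq_iff_cotNW_add_cotSE (h : IsPositiveSolution γ R) (hM : 0 < M) (hl : -M ≤ N)
    (hr : N ≤ M) : LnREq R N M ↔ cotNW R N M + cotSE R N M = 0 := by
  obtain ⟨hE, hN, hW, hS⟩ := h.pos_neighbours hM hl hr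
  rw [h.lnREq_iff_esymm hM hl hr, cotNW, cotSE,
    cotSum_add_eq_zero_iff (by positivity) (by positivity)]
  constructor <;> intro H <;> linear_combination H

theorem riEq_iff_leEq (h : IsPositiveSolution γ R) (hM : 0 < M) (hl : -M ≤ N) (hr : N ≤ M)
    (hln : LnREq R N M) : RiEq R N M ↔ LeEq R N M := by
  have hNE := (h.lnREq_iff_cotNE_add_cotSW hM hl hr).1 hln
  have hNW := (h.lnREq_iff_cotNW_add_cotSE hM hl hr).1 hln
  rw [h.riEq_iff hM hl hr, h.leEq_iff hM hl hr]
  constructor <;> intro H <;> linear_combination (N + M) * hNW + (M - N) * hNE - H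

theorem riEq_iff_upEq (h : IsPositiveSolution γ R) (hM : 0 < M) (hl : -M ≤ N) (hr : N ≤ M)
    (hln : LnREq R N M) : RiEq R N M ↔ UpEq R N M := by
  have hNW := (h.lnREq_iff_cotNW_add_cotSE hM hl hr).1 hln
  rw [h.riEq_iff hM hl hr, UpEq]
  constructor <;> intro H <;> linear_combination (N + M) * hNW - H

theorem lnREq_of_downEq (h : IsPositiveSolution γ R) (hl : -M < N) (hr : N < M)
    (hdown : DownEq R N M) (hRiLe : RiEq R N M ∨ LeEq R N M) : LnREq R N M := by
  have hM : 0 < M := by omega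
  unfold DownEq at hdown
  rcases hRiLe with hRi | hLe
  · have hne : ((M : ℝ) - N) ≠ 0 := by exact_mod_cast (sub_pos.2 hr).ne'
    rw [h.riEq_iff hM hl.le hr.le] at hRi
    rw [h.lnREq_iff_cotNE_add_cotSW hM hl.le hr.le]
    exact mul_left_cancel₀ hne (by linear_combination hRi - hdown)
  · have hne : ((N : ℝ) + M) ≠ 0 := by exact_mod_cast (show 0 < N + M by omega).ne'
    rw [h.leEq_iff hM hl.le hr.le] at hLe
    rw [h.lnREq_iff_cotNW_add_cotSE hM hl.le hr.le]
    exact mul_left_cancel₀ hne (by linear_combination hLe + hdown)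

theorem downEq_succ_of_upEq (h : IsPositiveSolution γ R) (hl : -M ≤ N) (hr : N ≤ M)
    (hup : UpEq R N M) : DownEq R N (M + 1) := by
  have hC := h.pos N M (by omega) (by omega) (by omega)
  have hN := h.pos N (M + 1) (by omega) (by omega) (by omega)
  have hE := h.pos (N + 1) M (by omega) (by omega) (by omega)
  have hW := h.pos (N - 1) M (by omega) (by omega) (by omega)
  have hNE := h.pos (N + 1) (M + 1) (by omega) (by omega) (by omega)
  have hNW := h.pos (N - 1) (M + 1) (by omega) (by omega) (by omega)
  have hsqE := h.square N M (by omega) hr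
  have hsqW := h.square (N - 1) M (by omega) (by omega)
  simp only [SquareEq, sub_add_cancel] at hsqE hsqW
  push_cast at hsqW
  have heast := mul_cotSum_of_square (m := M) (n := N) (add_pos hE hN).ne' (add_pos hC hNE).ne'
    hsqE
  have hwest := mul_cotSum_of_square (m := M) (n := -N) (γ := γ) (add_pos hW hN).ne'
    (add_pos hC hNW).ne' (by linear_combination hsqW)
  simp only [UpEq, DownEq, cotNW, cotNE, cotSE, cotSW, add_sub_cancel_right] at hup ⊢
  push_cast
  refine mul_left_cancel₀ (mul_pos two_pos hC).ne' ?_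
  linear_combination heast - hwest - 2 * R N (M + 1) * hup

theorem leEq_succ_of_riEq (h : IsPositiveSolution γ R) (hl : -M ≤ N) (hr : N < M)
    (hRi : RiEq R N M) : LeEq R (N + 1) M := by
  have hC := h.pos N M (by omega) (by omega) (by omega)
  have hE := h.pos (N + 1) M (by omega) (by omega) (by omega)
  have hN := h.pos N (M + 1) (by omega) (by omega) (by omega)
  have hS := h.pos N (M - 1) (by omega) (by omega) (by omega)
  have hNE := h.pos (N + 1) (M + 1) (by omega) (by omega) (by omega)
  have hSE := h.pos (N + 1) (M - 1) (by omega) (by omega) (by omega)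
  have hsqN := h.square N M (by omega) hr.le
  have hsqS := h.square N (M - 1) (by omega) (by omega)
  simp only [SquareEq, sub_add_cancel] at hsqN hsqS
  push_cast at hsqS
  have hnorth := mul_cotSum_of_square (m := N) (n := M) (γ := γ) (add_pos hN hE).ne'
    (add_pos hC hNE).ne' (by linear_combination hsqN)
  have hsouth := mul_cotSum_of_square (m := N) (n := -M) (γ := γ) (add_pos hS hE).ne'
    (add_pos hC hSE).ne' (by linear_combination hsqS)
  rw [h.riEq_iff (by omega) hl hr.le] at hRi
  rw [h.leEq_iff (by omega) (by omega) (by omega)]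
  simp only [cotNW, cotNE, cotSE, cotSW, add_sub_cancel_right] at hRi ⊢
  rw [cotSum_comm (R N M) (R (N + 1) M) (R N (M + 1))] at hRi
  rw [cotSum_comm (R (N + 1) M) (R (N + 1) (M - 1)) (R N M)]
  push_cast
  refine mul_left_cancel₀ (mul_pos two_pos hC).ne' ?_
  linear_combination hnorth - hsouth - 2 * R (N + 1) M * hRi

theorem equations_on_column (h : IsPositiveSolution γ R) (hN : 0 ≤ N) (hdiag : UpEq R N N)
    (hRiLe : ∀ M > N, RiEq R N M ∨ LeEq R N M) :
    ∀ M > N, RiEq R N M ∧ LeEq R N M ∧ LnREq R N M := by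
  have equations_succ (M : ℤ) (hM : N ≤ M) (hup : UpEq R N M) :
      RiEq R N (M + 1) ∧ LeEq R N (M + 1) ∧ LnREq R N (M + 1) := by
    have hdown := h.downEq_succ_of_upEq (by omega) hM hup
    have hor := hRiLe (M + 1) (by omega)
    have hln := h.lnREq_of_downEq (by omega) (by omega) hdown hor
    have hiff := h.riEq_iff_leEq (by omega) (by omega) (by omega) hln
    exact ⟨hor.elim id hiff.2, hor.elim hiff.1 id, hln⟩
  have hup (M : ℤ) (hM : N ≤ M) : UpEq R N M := by
    induction M, hM using Int.leInduction with
    | base => exact hdiag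
    | succ M hM ih =>
      obtain ⟨hRi, -, hln⟩ := equations_succ M hM ih
      exact (h.riEq_iff_upEq (by omega) (by omega) (by omega) hln).1 hRi
  intro M hM
  simpa only [sub_add_cancel] using equations_succ (M - 1) (by omega) (hup _ (by omega))

theorem equations_of_nonneg (h : IsPositiveSolution γ R) (hAxis : ∀ M > 0, RiEq R 0 M)
    (hN : 0 ≤ N) : ∀ M > N, RiEq R N M ∧ LeEq R N M ∧ LnREq R N M := by
  induction N, hN using Int.leInduction with
  | base => exact h.equations_on_column le_rfl (by simp [UpEq]) fun M hM => .inl (hAxis M hM)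
  | succ N hN ih =>
    have hLe (M : ℤ) (hM : N < M) : LeEq R (N + 1) M :=
      h.leEq_succ_of_riEq (by omega) hM (ih M hM).1
    refine h.equations_on_column (by omega) ?_ fun M hM => .inr (hLe M (by omega))
    have hdiag := (h.leEq_iff (by omega) (by omega) le_rfl).1 (hLe (N + 1) (by omega))
    simpa only [UpEq, sub_self, zero_mul, add_zero] using hdiag

theorem leEq_of_pos (h : IsPositiveSolution γ R) (hAxis : ∀ M > 0, RiEq R 0 M)
    (hN : 0 < N) (hM : N ≤ M) : LeEq R N M := by
  have hRi := (h.equations_of_nonneg hAxis (N := N - 1) (by omega) M (by omega)).1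
  simpa only [sub_add_cancel] using h.leEq_succ_of_riEq (by omega) (by omega) hRi

theorem riEq_reflection_axis (h : IsPositiveSolution γ R) (hAxis : ∀ M > 0, RiEq R 0 M) :
    ∀ M > 0, RiEq (reflection R) 0 M :=
  fun M hM => riEq_reflection.2 (h.equations_of_nonneg hAxis (by simp) M (by simpa using hM)).2.1

theorem riEq (h : IsPositiveSolution γ R) (hAxis : ∀ M > 0, RiEq R 0 M) (hNM : |N| ≤ M)
    (hdiag : ¬(0 ≤ N ∧ M = N)) : RiEq R N M := by
  rw [abs_le] at hNM
  rcases le_or_gt 0 N with hN | hN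
  · exact (h.equations_of_nonneg hAxis hN M (by omega)).1
  · have hLe := h.reflect.leEq_of_pos (h.riEq_reflection_axis hAxis) (N := -N) (M := M)
      (by omega) (by omega)
    simpa only [leEq_reflection, neg_neg] using hLe

theorem leEq (h : IsPositiveSolution γ R) (hAxis : ∀ M > 0, RiEq R 0 M) (hNM : |N| ≤ M)
    (hdiag : ¬(N ≤ 0 ∧ M = -N)) : LeEq R N M := by
  have hRi := h.reflect.riEq (h.riEq_reflection_axis hAxis) (N := -N) (M := M) (by rwa [abs_neg])
    (by omega)
  simpa only [riEq_reflection, neg_neg] using hRi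

theorem lnREq (h : IsPositiveSolution γ R) (hAxis : ∀ M > 0, RiEq R 0 M) (hNM : |N| < M) :
    LnREq R N M := by
  rw [abs_lt] at hNM
  rcases le_total 0 N with hN | hN
  · exact (h.equations_of_nonneg hAxis hN M hNM.2).2.2
  · have hln := (h.reflect.equations_of_nonneg (h.riEq_reflection_axis hAxis) (N := -N)
      (by omega) M (by omega)).2.2
    simpa only [lnREq_reflection, neg_neg] using hln

end IsPositiveSolution

theorem memVl_of_le {N M : ℤ} (hl : -M - 1 ≤ N) (hr : N ≤ M) : memVl N M := by
  rw [memVl, abs_le]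
  omega

theorem pos_on_neighbourhood {R : ℤ → ℤ → ℝ} (hposV : ∀ N M : ℤ, |N| ≤ M → 0 < R N M)
    (hposL : ∀ k : ℤ, 1 ≤ k → 0 < R (-k) (k - 1)) (hposR : ∀ k : ℤ, 0 ≤ k → 0 < R (k + 1) k)
    {N M : ℤ} (hM : 0 ≤ M) (hl : -M - 1 ≤ N) (hr : N ≤ M + 1) : 0 < R N M := by
  rcases hl.eq_or_lt with rfl | hl
  · convert hposL (M + 1) (by omega) using 2 <;> ring
  rcases hr.eq_or_lt with rfl | hr
  · exact hposR M hM
  · exact hposV N M (abs_le.2 (by omega))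

theorem extension_lemma_general (γ : ℝ) (R : ℤ → ℤ → ℝ)
    (hposV : ∀ N M : ℤ, |N| ≤ M → 0 < R N M)
    (hposL : ∀ k : ℤ, 1 ≤ k → 0 < R (-k) (k - 1))
    (hposR : ∀ k : ℤ, 0 ≤ k → 0 < R (k + 1) k)
    (hsq : ∀ N M : ℤ, memVl N M → SquareEq γ R N M)
    (hRiAxis : ∀ M : ℤ, 0 ≤ M → RiEq R 0 M) :
    (∀ N M : ℤ, |N| ≤ M → ¬(0 ≤ N ∧ M = N) → RiEq R N M) ∧
    (∀ N M : ℤ, |N| ≤ M → ¬(N ≤ 0 ∧ M = -N) → LeEq R N M) ∧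
    (∀ N M : ℤ, |N| < M → LnREq R N M) := by
  have h : IsPositiveSolution γ R :=
    { pos _ _ := pos_on_neighbourhood hposV hposL hposR
      square _ _ hl hr := hsq _ _ (memVl_of_le hl hr) }
  have hAxis (M : ℤ) (hM : M > 0) : RiEq R 0 M := hRiAxis M hM.le
  exact ⟨fun _ _ => h.riEq hAxis, fun _ _ => h.leEq hAxis, fun _ _ => h.lnREq hAxis⟩

/-- Lemma 3 (extension lemma): if a positive radius function satisfies (square) on
`V_l` and (Ri) on the imaginary axis, then it satisfies (Ri) on
`V ∖ {N + iN : N ∈ ℕ}`, (Le) on `V ∖ {-N + iN : N ∈ ℕ}` and (lnR) on `V_int`. -/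
theorem extension_lemma (γ : ℝ) (hγ0 : 0 < γ) (hγ2 : γ < 2)
    (R : ℤ → ℤ → ℝ)
    (hposV : ∀ N M : ℤ, |N| ≤ M → 0 < R N M)
    (hposL : ∀ k : ℤ, 1 ≤ k → 0 < R (-k) (k-1))
    (hposR : ∀ k : ℤ, 0 ≤ k → 0 < R (k+1) k)
    (hsq : ∀ N M : ℤ, memVl N M → SquareEq γ R N M)
    (hRiAxis : ∀ M : ℤ, 0 ≤ M → RiEq R 0 M) :
    (∀ N M : ℤ, |N| ≤ M → ¬(0 ≤ N ∧ M = N) → RiEq R N M) ∧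
    (∀ N M : ℤ, |N| ≤ M → ¬(N ≤ 0 ∧ M = -N) → LeEq R N M) ∧
    (∀ N M : ℤ, |N| < M → LnREq R N M) :=
  extension_lemma_general γ R hposV hposL hposR hsq hRiAxis

end
end

section
/- Let 0 < γ < 2 and let R : ℤ + iℤ → ℝ satisfy equation (square) with parameter γ at every z ∈ V_l and equation (Ri) at every z ∈ V_int, with R(0) = 1 and R(i) = tan(γπ/4), and suppose R(N+1+iN) + R(N+i(N+1)) ≠ 0 and R(−N−1+iN) + R(−N+i(N+1)) ≠ 0 for all N ≥ 0. If R(iM) > 0 for every integer M ≥ 0, then R(z) > 0 for every z ∈ V. -/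
noncomputable section

/-!
On an elementary square `a = R(z)`, `b = R(z+1)`, `c = R(z+1+i)`, `d = R(z+i)` with
`0 ≤ N ≤ M`, equation (square) reads
`c * (b * (2(N+1) - γ) + d * (2(M+1) - γ)) = a * (b * (2M + γ) + d * (2N + γ))`,
so positivity passes from `a`, `b`, `d` to `c`. When `M = N` it factors as
`(b + d) * (c * (2(N+1) - γ) - a * (2N + γ)) = 0`, so positivity passes from `a` to `c` as soon as
`b + d ≠ 0`. Column by column, starting from the imaginary axis, this covers `0 ≤ N ≤ M`; the
reflection `N + iM ↦ -N + iM` preserves (square) and gives the other half of `V`.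
-/

namespace SquareEq

variable {γ : ℝ} {R : ℤ → ℤ → ℝ} {N M : ℤ}

theorem comp_neg_iff : SquareEq γ (fun N M ↦ R (-N) M) N M ↔ SquareEq γ R (-N - 1) M := by
  simp only [SquareEq, neg_add', sub_add_cancel]
  push_cast
  constructor <;> intro h <;> linear_combination h

theorem corner_mul_eq (h : SquareEq γ R N M) :
    R (N + 1) (M + 1) *
        (R (N + 1) M * (2 * ((N : ℝ) + 1) - γ) + R N (M + 1) * (2 * ((M : ℝ) + 1) - γ)) =
      R N M * (R (N + 1) M * (2 * M + γ) + R N (M + 1) * (2 * N + γ)) := by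
  unfold SquareEq at h
  linear_combination h

theorem corner_mul_eq_of_diagonal (h : SquareEq γ R N N) (hne : R (N + 1) N + R N (N + 1) ≠ 0) :
    R (N + 1) (N + 1) * (2 * ((N : ℝ) + 1) - γ) = R N N * (2 * N + γ) := by
  refine mul_left_cancel₀ hne ?_
  linear_combination h.corner_mul_eq

theorem corner_pos_of_diagonal (h : SquareEq γ R N N) (hN : 0 < 2 * (N : ℝ) + γ)
    (hN' : 0 < 2 * ((N : ℝ) + 1) - γ) (hne : R (N + 1) N + R N (N + 1) ≠ 0)
    (ha : 0 < R N N) : 0 < R (N + 1) (N + 1) := by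
  refine pos_of_mul_pos_left ?_ hN'.le
  rw [h.corner_mul_eq_of_diagonal hne]
  positivity

theorem corner_pos (h : SquareEq γ R N M) (hNM : N ≤ M) (hN : 0 < 2 * (N : ℝ) + γ)
    (hN' : 0 < 2 * ((N : ℝ) + 1) - γ) (ha : 0 < R N M) (hb : 0 < R (N + 1) M)
    (hd : 0 < R N (M + 1)) : 0 < R (N + 1) (M + 1) := by
  have hNM' : (N : ℝ) ≤ M := by exact_mod_cast hNM
  have hM : 0 < 2 * (M : ℝ) + γ := by linarith
  have hM' : 0 < 2 * ((M : ℝ) + 1) - γ := by linarith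
  have hcoef : 0 < R (N + 1) M * (2 * ((N : ℝ) + 1) - γ) +
      R N (M + 1) * (2 * ((M : ℝ) + 1) - γ) := by positivity
  refine pos_of_mul_pos_left ?_ hcoef.le
  rw [h.corner_mul_eq]
  positivity

theorem pos_of_pos_axis (hγ0 : 0 < γ) (hγ2 : γ < 2)
    (hsq : ∀ N M : ℤ, 0 ≤ N → N ≤ M → SquareEq γ R N M)
    (hne : ∀ N : ℤ, 0 ≤ N → R (N + 1) N + R N (N + 1) ≠ 0)
    (haxis : ∀ M : ℤ, 0 ≤ M → 0 < R 0 M) (hN : 0 ≤ N) (hNM : N ≤ M) : 0 < R N M := by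
  induction N, hN using Int.leInduction generalizing M with
  | base => exact haxis M hNM
  | succ N hN column_pos =>
    have hN₀ : (0 : ℝ) ≤ N := by exact_mod_cast hN
    have hcoef : 0 < 2 * (N : ℝ) + γ := by linarith
    have hcoef' : 0 < 2 * ((N : ℝ) + 1) - γ := by linarith
    induction M, hNM using Int.leInduction with
    | base =>
      exact (hsq N N hN le_rfl).corner_pos_of_diagonal hcoef hcoef' (hne N hN) (column_pos le_rfl)
    | succ M hM below_pos =>
      have hNM : N ≤ M := by omega
      exact (hsq N M hN hNM).corner_pos hNM hcoef hcoef' (column_pos hNM) below_pos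
        (column_pos (by omega))

end SquareEq

theorem positivity_propagates_general (γ : ℝ) (hγ0 : 0 < γ) (hγ2 : γ < 2)
    (R : ℤ → ℤ → ℝ)
    (hsq : ∀ N M : ℤ, memVl N M → SquareEq γ R N M)
    (hne1 : ∀ N : ℤ, 0 ≤ N → R (N + 1) N + R N (N + 1) ≠ 0)
    (hne2 : ∀ N : ℤ, 0 ≤ N → R (-N - 1) N + R (-N) (N + 1) ≠ 0)
    (haxis : ∀ M : ℤ, 0 ≤ M → 0 < R 0 M) :
    ∀ N M : ℤ, |N| ≤ M → 0 < R N M := by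
  intro N M hNM
  rcases le_total 0 N with hN | hN
  · have square_of_nonneg (N M : ℤ) (hN : 0 ≤ N) (hNM : N ≤ M) : SquareEq γ R N M :=
      hsq N M (.inl ((abs_of_nonneg hN).trans_le hNM))
    exact SquareEq.pos_of_pos_axis hγ0 hγ2 square_of_nonneg hne1 haxis hN
      ((le_abs_self N).trans hNM)
  · have reflected_square (N M : ℤ) (hN : 0 ≤ N) (hNM : N ≤ M) :
        SquareEq γ (fun N M ↦ R (-N) M) N M :=
      SquareEq.comp_neg_iff.mpr (hsq _ M (by unfold memVl; grind))
    simpa using SquareEq.pos_of_pos_axis hγ0 hγ2 reflected_square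
      (fun N hN ↦ by simpa only [neg_add'] using hne2 N hN) (by simpa using haxis)
      (neg_nonneg.mpr hN) ((neg_le_abs N).trans hNM)

/-- Proposition 2: if a solution of (square) and (Ri) with the `Z^γ` initial data
is positive on the imaginary axis, then it is positive on all of `V`. -/
theorem positivity_propagates (γ : ℝ) (hγ0 : 0 < γ) (hγ2 : γ < 2)
    (R : ℤ → ℤ → ℝ)
    (hsq : ∀ N M : ℤ, memVl N M → SquareEq γ R N M)
    (hRi : ∀ N M : ℤ, |N| < M → RiEq R N M)
    (h0 : R 0 0 = 1)
    (hi : R 0 1 = Real.tan (γ * Real.pi / 4))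
    (hne1 : ∀ N : ℤ, 0 ≤ N → R (N+1) N + R N (N+1) ≠ 0)
    (hne2 : ∀ N : ℤ, 0 ≤ N → R (-N-1) N + R (-N) (N+1) ≠ 0)
    (haxis : ∀ M : ℤ, 0 ≤ M → 0 < R 0 M) :
    ∀ N M : ℤ, |N| ≤ M → 0 < R N M := by
  exact positivity_propagates_general γ hγ0 hγ2 R hsq hne1 hne2 haxis

end
end
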